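/- Let n ≥ 1 and let Ω ⊂ ℂ^n be a bounded open strictly convex domain with smooth boundary. Let u : Ω → ℝ be a smooth strictly plurisubharmonic function solving det(u_{ij̄}) = e^{(n+1)u} in Ω with u(z) → +∞ as z → ∂Ω, and assume that v = e^{-u} extends to a C² function on the closure of Ω with v = 0 on ∂Ω. Set A = (u_{ij̄}) and B = (u_{ij}). Then the Hermitian matrix M = A − B·(Ā)⁻¹·B̄ is positive definite at every point of Ω. -/

import Mathlib

/-!
Half of the real Hessian of `u` is the quadratic form of the block matrix `(A, B; B̄, Ā)`, of which
`M` is a Schur complement, so the claim is that the real Hessian of `u` is positive definite.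

Convexity is a maximum principle for `u((x + y) / 2) - u(x) / 2 - u(y) / 2`, dilated slightly so
that the maximum is attained inside. At a maximum, take vectors `wᵢ` diagonalising the Levi forms
at `x` and `y` to `κᵢ⁻¹` and `κᵢ`. Moving `x` and `y` along suitable multiples of `wᵢ` shows that,
up to the dilation, the diagonal entries of the Levi form at the midpoint are at most `1`. By the
equation and Hadamard's inequality the exponential of a positive multiple of the maximum is then at
most `1`.

For strictness, start at the minimum of `u - |z|²`, where the Hessian of `u` is at least that of
`|z|²`. Adding Hopf's barrier, weighted by `|x - y|²`, to the two-point function shows that the set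
where midpoint convexity is strict with a quadratic gain is closed in the connected set `Ω`.
-/

open Complex Matrix
open scoped ComplexOrder

noncomputable section

/-- Wirtinger derivative `∂/∂z_j` of a complex-valued function on `ℂⁿ`. -/
def wdz {n : ℕ} (f : (Fin n → ℂ) → ℂ) (j : Fin n) (z : Fin n → ℂ) : ℂ :=
  (fderiv ℝ f z (Pi.single j 1) - Complex.I * fderiv ℝ f z (Pi.single j Complex.I)) / 2

/-- Wirtinger derivative `∂/∂z̄_j` of a complex-valued function on `ℂⁿ`. -/
def wdzbar {n : ℕ} (f : (Fin n → ℂ) → ℂ) (j : Fin n) (z : Fin n → ℂ) : ℂ :=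
  (fderiv ℝ f z (Pi.single j 1) + Complex.I * fderiv ℝ f z (Pi.single j Complex.I)) / 2

/-- A real-valued function on `ℂⁿ` viewed as complex-valued. -/
def cplx {n : ℕ} (u : (Fin n → ℂ) → ℝ) : (Fin n → ℂ) → ℂ := fun z => (u z : ℂ)

/-- The complex Hessian `A = (u_{ij̄}) = (∂_i ∂_{j̄} u)`. -/
def hessA {n : ℕ} (u : (Fin n → ℂ) → ℝ) (z : Fin n → ℂ) : Matrix (Fin n) (Fin n) ℂ :=
  Matrix.of fun i j => wdz (wdzbar (cplx u) j) i z

/-- The matrix `B = (u_{ij}) = (∂_i ∂_j u)`. -/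
def hessB {n : ℕ} (u : (Fin n → ℂ) → ℝ) (z : Fin n → ℂ) : Matrix (Fin n) (Fin n) ℂ :=
  Matrix.of fun i j => wdz (wdz (cplx u) j) i z

/-- `u^{ij̄}`, the entries of the inverse of the complex Hessian, with the convention
`∑_j u^{ij̄} u_{kj̄} = δ_{ik}`. -/
def uInv {n : ℕ} (u : (Fin n → ℂ) → ℝ) (z : Fin n → ℂ) (i j : Fin n) : ℂ :=
  (hessA u z)⁻¹ j i

/-- Entrywise Wirtinger derivative `∂_i` of a matrix-valued function. -/
def mwdz {n : ℕ} (F : (Fin n → ℂ) → Matrix (Fin n) (Fin n) ℂ) (i : Fin n) (z : Fin n → ℂ) :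
    Matrix (Fin n) (Fin n) ℂ :=
  Matrix.of fun p q => wdz (fun w => F w p q) i z

/-- Entrywise Wirtinger derivative `∂_{j̄}` of a matrix-valued function. -/
def mwdzbar {n : ℕ} (F : (Fin n → ℂ) → Matrix (Fin n) (Fin n) ℂ) (j : Fin n) (z : Fin n → ℂ) :
    Matrix (Fin n) (Fin n) ℂ :=
  Matrix.of fun p q => wdzbar (fun w => F w p q) j z

/-- Entrywise complex conjugate of a matrix. -/
def mconj {n : ℕ} (M : Matrix (Fin n) (Fin n) ℂ) : Matrix (Fin n) (Fin n) ℂ :=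
  M.map (starRingEnd ℂ)

/-- The real coordinate directions `x_1, …, x_n, y_1, …, y_n` of `ℂⁿ`. -/
def realDir {n : ℕ} : (Fin n ⊕ Fin n) → (Fin n → ℂ)
  | Sum.inl j => Pi.single j 1
  | Sum.inr j => Pi.single j Complex.I

/-- The real Hessian of `u : ℂⁿ → ℝ` in the coordinates `(x_1,…,x_n,y_1,…,y_n)`. -/
def realHess {n : ℕ} (u : (Fin n → ℂ) → ℝ) (z : Fin n → ℂ) :
    Matrix (Fin n ⊕ Fin n) (Fin n ⊕ Fin n) ℝ :=
  Matrix.of fun a b => fderiv ℝ (fun w => fderiv ℝ u w (realDir b)) z (realDir a)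

open Filter Topology

section SecondDerivative

variable {E F : Type*} [NormedAddCommGroup E] [NormedSpace ℝ E] [NormedAddCommGroup F]
  [NormedSpace ℝ F] {u : E → ℝ} {z : E}

theorem second_deriv_nonpos_of_isLocalMax {φ : ℝ → ℝ} {s : ℝ} (hφ : ContinuousAt φ s)
    (hmax : IsLocalMax φ s) : deriv (deriv φ) s ≤ 0 := by
  by_contra! hpos
  have hmin : IsLocalMin φ s := isLocalMin_of_deriv_deriv_pos hpos hmax.deriv_eq_zero hφ
  have hconst : φ =ᶠ[𝓝 s] fun _ => φ s := by
    filter_upwards [hmax, hmin] with t ht ht' using le_antisymm ht ht'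
  simp [hconst.deriv.deriv_eq] at hpos

theorem hasDerivAt_line (z w : E) (s : ℝ) : HasDerivAt (fun s : ℝ => z + s • w) w s := by
  simpa using ((hasDerivAt_id s).smul_const w).const_add z

theorem tendsto_line (z w : E) : Tendsto (fun s : ℝ => z + s • w) (𝓝 0) (𝓝 z) := by
  simpa using (hasDerivAt_line z w 0).continuousAt.tendsto

theorem hasDerivAt_comp_line {w : E} {s : ℝ} (hu : DifferentiableAt ℝ u (z + s • w)) :
    HasDerivAt (fun s : ℝ => u (z + s • w)) (fderiv ℝ u (z + s • w) w) s :=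
  hu.hasFDerivAt.comp_hasDerivAt s (hasDerivAt_line z w s)

theorem hasDerivAt_fderiv_comp_line {w : E} {s : ℝ} (hu : ContDiffAt ℝ 2 u (z + s • w)) :
    HasDerivAt (fun s : ℝ => fderiv ℝ u (z + s • w) w)
      (fderiv ℝ (fderiv ℝ u) (z + s • w) w w) s := by
  have hdiff : DifferentiableAt ℝ (fderiv ℝ u) (z + s • w) :=
    (hu.fderiv_right (m := 1) le_rfl).differentiableAt one_ne_zero
  have hderiv : HasDerivAt (fun s : ℝ => fderiv ℝ u (z + s • w))
      (fderiv ℝ (fderiv ℝ u) (z + s • w) w) s :=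
    hdiff.hasFDerivAt.comp_hasDerivAt s (hasDerivAt_line z w s)
  simpa using hderiv.clm_apply (hasDerivAt_const s w)

theorem fderiv_fderiv_apply_eq_deriv_deriv (hu : ContDiffAt ℝ 2 u z) (w : E) :
    fderiv ℝ (fderiv ℝ u) z w w = deriv (deriv fun s : ℝ => u (z + s • w)) 0 := by
  have hfirst : deriv (fun s : ℝ => u (z + s • w)) =ᶠ[𝓝 0]
      fun s => fderiv ℝ u (z + s • w) w :=
    ((tendsto_line z w).eventually (hu.eventually (by simp))).mono fun s hs =>
      (hasDerivAt_comp_line (hs.differentiableAt two_ne_zero)).deriv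
  have hsecond := hasDerivAt_fderiv_comp_line (w := w) (s := 0) (by simpa using hu)
  simpa using (hsecond.congr_of_eventuallyEq hfirst).deriv.symm

theorem fderiv_fderiv_comp_affine (L : F →L[ℝ] E) (b : E) {p : F}
    (hu : ContDiffAt ℝ 2 u (L p + b)) (q : F) :
    fderiv ℝ (fderiv ℝ fun p => u (L p + b)) p q q =
      fderiv ℝ (fderiv ℝ u) (L p + b) (L q) (L q) := by
  have hcomp : ContDiffAt ℝ 2 (fun p => u (L p + b)) p :=
    hu.comp p (L.contDiff.add contDiff_const).contDiffAt
  simp only [fderiv_fderiv_apply_eq_deriv_deriv hcomp, fderiv_fderiv_apply_eq_deriv_deriv hu,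
    map_add, map_smul, add_right_comm _ _ b]

theorem fderiv_fderiv_apply_nonpos_of_isLocalMax (hu : ContDiffAt ℝ 2 u z)
    (hmax : IsLocalMax u z) (w : E) : fderiv ℝ (fderiv ℝ u) z w w ≤ 0 := by
  rw [fderiv_fderiv_apply_eq_deriv_deriv hu w]
  refine second_deriv_nonpos_of_isLocalMax
    (hasDerivAt_comp_line (by simpa using hu.differentiableAt two_ne_zero)).continuousAt ?_
  simpa [IsLocalMax, IsMaxFilter] using (tendsto_line z w).eventually hmax

end SecondDerivative

section Levi

variable {E F : Type*} [NormedAddCommGroup E] [NormedSpace ℂ E] [NormedAddCommGroup F]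
  [NormedSpace ℂ F] {u v : E → ℝ} {z : E}

/-- The Levi form `∑ᵢⱼ u_{ij̄} wᵢ w̄ⱼ` of `u` at `z`, in coordinate-free terms. -/
def levi (u : E → ℝ) (z w : E) : ℝ :=
  (fderiv ℝ (fderiv ℝ u) z w w + fderiv ℝ (fderiv ℝ u) z (Complex.I • w) (Complex.I • w)) / 4

theorem levi_real_smul (r : ℝ) (w : E) : levi u z (r • w) = r ^ 2 * levi u z w := by
  simp only [levi, smul_comm Complex.I r w, map_smul, _root_.smul_apply, smul_eq_mul]
  ring

theorem levi_add (hu : ContDiffAt ℝ 2 u z) (hv : ContDiffAt ℝ 2 v z) (w : E) :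
    levi (fun x => u x + v x) z w = levi u z w + levi v z w := by
  have hadd (w : E) := congrArg (fun D => D ![w, w]) (iteratedFDeriv_add_apply hu hv)
  simp only [iteratedFDeriv_two_apply, _root_.add_apply, Pi.add_def,
    Matrix.cons_val_zero, Matrix.cons_val_one] at hadd
  rw [levi, levi, levi, hadd, hadd]
  ring

theorem levi_const_mul (r : ℝ) (hu : ContDiffAt ℝ 2 u z) (w : E) :
    levi (fun x => r * u x) z w = r * levi u z w := by
  have hmul (w : E) :=
    congrArg (fun D => D ![w, w]) (iteratedFDeriv_const_smul_apply (a := r) hu)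
  simp only [iteratedFDeriv_two_apply, _root_.smul_apply, Pi.smul_def,
    Matrix.cons_val_zero, Matrix.cons_val_one, smul_eq_mul] at hmul
  rw [levi, levi, hmul, hmul]
  ring

theorem levi_comp_affine (L : F →L[ℂ] E) (b : E) {p : F} (hu : ContDiffAt ℝ 2 u (L p + b))
    (q : F) : levi (fun p => u (L p + b)) p q = levi u (L p + b) (L q) := by
  have hcomp := fderiv_fderiv_comp_affine (L.restrictScalars ℝ) b hu
  simp only [ContinuousLinearMap.coe_restrictScalars'] at hcomp
  rw [levi, levi, hcomp, hcomp, map_smul]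

theorem levi_nonpos_of_isLocalMax (hu : ContDiffAt ℝ 2 u z) (hmax : IsLocalMax u z) (w : E) :
    levi u z w ≤ 0 := by
  have h₁ := fderiv_fderiv_apply_nonpos_of_isLocalMax hu hmax w
  have h₂ := fderiv_fderiv_apply_nonpos_of_isLocalMax hu hmax (Complex.I • w)
  rw [levi]
  linarith

end Levi

section TwoPoint

variable {H : Type*} [NormedAddCommGroup H] [NormedSpace ℂ H] {u : H → ℝ}

/-- The tilt `ν`: perturbing `(x, y)` along `((1 + ν) w, (1 - ν) w)` moves the midpoint by `w`.
When the Levi forms at `x` and `y` take the values `κ⁻¹` and `κ` on `w`, the minimiser of the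
averaged form is `(κ - 1) / (κ + 1)`; this rational function of `κ²` is nearly as good and
easier to estimate. -/
def tilt (κ : ℝ) : ℝ := (κ ^ 2 - 1) / (κ ^ 2 + 1)

theorem tilt_weight_le {κ : ℝ} (hκ : 0 < κ) :
    (1 + tilt κ) ^ 2 * κ⁻¹ / 2 + (1 - tilt κ) ^ 2 * κ / 2 ≤ 1 - tilt κ ^ 2 / 2 := by
  have hdefect : 1 - tilt κ ^ 2 / 2 - ((1 + tilt κ) ^ 2 * κ⁻¹ / 2 + (1 - tilt κ) ^ 2 * κ / 2) =
      ((κ - 1) ^ 2 / (κ ^ 2 + 1)) ^ 2 / 2 := by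
    rw [tilt]
    field_simp
    ring
  have := sq_nonneg ((κ - 1) ^ 2 / (κ ^ 2 + 1))
  linarith

/-- The two-point function `J(x, y) + u(t (x + y) / 2 + b) - u(x) / 2 - u(y) / 2` on `H × H`: for
`J = 0`, `t = 1` and `b = 0` it measures the failure of midpoint convexity. -/
def twoPoint (u : H → ℝ) (t : ℝ) (b : H) (J : H × H → ℝ) (p : H × H) : ℝ :=
  J p + u (t • midpoint ℝ p.1 p.2 + b) - u p.1 / 2 - u p.2 / 2

variable {x y b : H} {t : ℝ} {J : H × H → ℝ}

theorem contDiffAt_twoPoint (hJ : ContDiffAt ℝ 2 J (x, y)) (hux : ContDiffAt ℝ 2 u x)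
    (huy : ContDiffAt ℝ 2 u y) (huz : ContDiffAt ℝ 2 u (t • midpoint ℝ x y + b)) :
    ContDiffAt ℝ 2 (twoPoint u t b J) (x, y) := by
  have hmid : ContDiff ℝ 2 fun p : H × H => t • midpoint ℝ p.1 p.2 + b := by
    simp only [midpoint_eq_smul_add]
    fun_prop
  exact ((hJ.add (huz.comp (x, y) hmid.contDiffAt)).sub
    ((hux.comp (x, y) contDiffAt_fst).div_const 2)).sub
    ((huy.comp (x, y) contDiffAt_snd).div_const 2)

theorem levi_twoPoint (hJ : ContDiffAt ℝ 2 J (x, y)) (hux : ContDiffAt ℝ 2 u x)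
    (huy : ContDiffAt ℝ 2 u y) (huz : ContDiffAt ℝ 2 u (t • midpoint ℝ x y + b)) (v w : H) :
    levi (twoPoint u t b J) (x, y) (v, w) = levi J (x, y) (v, w) +
      levi u (t • midpoint ℝ x y + b) (t • midpoint ℝ v w) - levi u x v / 2 - levi u y w / 2 := by
  let L : H × H →L[ℂ] H :=
    ((t / 2 : ℝ) : ℂ) • (ContinuousLinearMap.fst ℂ H H + ContinuousLinearMap.snd ℂ H H)
  have hL (p : H × H) : L p = t • midpoint ℝ p.1 p.2 := by
    simp only [L, midpoint_eq_smul_add, smul_smul, _root_.smul_apply, _root_.add_apply,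
      ContinuousLinearMap.coe_fst', ContinuousLinearMap.coe_snd', Complex.coe_smul, invOf_eq_inv,
      div_eq_mul_inv]
  have hsum : twoPoint u t b J = fun p => J p + u (L p + b) +
      -(1 / 2) * u (ContinuousLinearMap.fst ℂ H H p + 0) +
      -(1 / 2) * u (ContinuousLinearMap.snd ℂ H H p + 0) := by
    ext p
    rw [twoPoint, hL, add_zero, add_zero, ContinuousLinearMap.coe_fst',
      ContinuousLinearMap.coe_snd']
    ring
  have hcomp {L : H × H →L[ℂ] H} {b : H} (h : ContDiffAt ℝ 2 u (L (x, y) + b)) :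
      ContDiffAt ℝ 2 (fun p => u (L p + b)) (x, y) :=
    h.comp (x, y) ((L.restrictScalars ℝ).contDiff.add contDiff_const).contDiffAt
  have huL : ContDiffAt ℝ 2 u (L (x, y) + b) := by rwa [hL]
  have hufst : ContDiffAt ℝ 2 u (ContinuousLinearMap.fst ℂ H H (x, y) + 0) := by simpa
  have husnd : ContDiffAt ℝ 2 u (ContinuousLinearMap.snd ℂ H H (x, y) + 0) := by simpa
  have hfst := contDiffAt_const (c := -(1 / 2 : ℝ)).mul (hcomp hufst)
  have hsnd := contDiffAt_const (c := -(1 / 2 : ℝ)).mul (hcomp husnd)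
  have hJL := hJ.add (hcomp huL)
  rw [hsum, levi_add (hJL.add hfst) hsnd, levi_add hJL hfst, levi_add hJ (hcomp huL),
    levi_const_mul _ (hcomp hufst), levi_const_mul _ (hcomp husnd), levi_comp_affine L b huL,
    levi_comp_affine _ 0 hufst, levi_comp_affine _ 0 husnd, hL, hL]
  simp only [ContinuousLinearMap.coe_fst', ContinuousLinearMap.coe_snd', add_zero]
  ring

theorem levi_le_of_isLocalMax_twoPoint {w : H} {κ : ℝ} (hJ : ContDiffAt ℝ 2 J (x, y))
    (hux : ContDiffAt ℝ 2 u x) (huy : ContDiffAt ℝ 2 u y)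
    (huz : ContDiffAt ℝ 2 u (t • midpoint ℝ x y + b))
    (hmax : IsLocalMax (twoPoint u t b J) (x, y)) (hκ : 0 < κ)
    (hx : levi u x w = κ⁻¹) (hy : levi u y w = κ) :
    t ^ 2 * levi u (t • midpoint ℝ x y + b) w ≤
      1 - tilt κ ^ 2 / 2 - levi J (x, y) ((1 + tilt κ) • w, (1 - tilt κ) • w) := by
  have hmid : midpoint ℝ ((1 + tilt κ) • w) ((1 - tilt κ) • w) = w := by
    rw [midpoint_eq_smul_add, ← add_smul, smul_smul, invOf_eq_inv]
    convert one_smul ℝ w using 2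
    ring
  have hnonpos := levi_nonpos_of_isLocalMax (contDiffAt_twoPoint hJ hux huy huz) hmax
    ((1 + tilt κ) • w, (1 - tilt κ) • w)
  rw [levi_twoPoint hJ hux huy huz, hmid] at hnonpos
  simp only [levi_real_smul, hx, hy] at hnonpos
  have := tilt_weight_le hκ
  linarith

end TwoPoint

section Exhaustion

variable {X : Type*} [TopologicalSpace X] {Ω : Set X} {u : X → ℝ}

/-- `u` is an exhaustion function of `Ω`: its sublevel sets in `Ω` are compact. -/
def IsExhaustion (Ω : Set X) (u : X → ℝ) : Prop :=
  ∀ C, IsCompact {z ∈ Ω | u z ≤ C}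

theorem IsExhaustion.exists_isMinOn (hexh : IsExhaustion Ω u) (hu : ContinuousOn u Ω)
    (hne : Ω.Nonempty) : ∃ z ∈ Ω, IsMinOn u Ω z := by
  obtain ⟨z₀, hz₀⟩ := hne
  obtain ⟨z, ⟨hz, -⟩, hmin⟩ := (hexh (u z₀)).exists_isMinOn ⟨z₀, hz₀, le_rfl⟩
    (hu.mono fun _ h => h.1)
  refine ⟨z, hz, fun x hx => ?_⟩
  rcases le_total (u x) (u z₀) with hle | hge
  · exact hmin ⟨hx, hle⟩
  · exact (hmin ⟨hz₀, le_rfl⟩).trans hge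

theorem IsExhaustion.inter_isClosed (hexh : IsExhaustion Ω u) {T : Set X} (hT : IsClosed T) :
    IsExhaustion (Ω ∩ T) u := fun C => by
  convert (hexh C).inter_right hT using 1
  ext z
  exact and_right_comm

theorem isExhaustion_of_subset_isCompact [T2Space X] (hu : ContinuousOn u Ω)
    (hK : ∀ C, ∃ K ⊆ Ω, IsCompact K ∧ {z ∈ Ω | u z ≤ C} ⊆ K) : IsExhaustion Ω u := fun C => by
  obtain ⟨K, hKΩ, hKc, hsub⟩ := hK C
  have hclosed : IsClosed (K ∩ u ⁻¹' Set.Iic C) :=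
    (hu.mono hKΩ).preimage_isClosed_of_isClosed hKc.isClosed isClosed_Iic
  convert hKc.of_isClosed_subset hclosed Set.inter_subset_left using 1
  ext z
  exact ⟨fun hz => ⟨hsub hz, hz.2⟩, fun hz => ⟨hKΩ hz.1, hz.2⟩⟩

theorem IsExhaustion.sub_of_bddAbove [T2Space X] (hexh : IsExhaustion Ω u)
    (hu : ContinuousOn u Ω) {φ : X → ℝ} (hφ : ContinuousOn φ Ω) {C : ℝ} (hC : ∀ z ∈ Ω, φ z ≤ C) :
    IsExhaustion Ω fun z => u z - φ z :=
  isExhaustion_of_subset_isCompact (hu.sub hφ) fun B =>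
    ⟨{z ∈ Ω | u z ≤ B + C}, Set.sep_subset _ _, hexh _, fun z ⟨hz, hzB⟩ =>
      ⟨hz, by linarith [hC z hz]⟩⟩

theorem continuousOn_prod_average (hu : ContinuousOn u Ω) :
    ContinuousOn (fun p : X × X => u p.1 / 2 + u p.2 / 2) (Ω ×ˢ Ω) :=
  ((hu.comp continuousOn_fst fun _ hp => hp.1).div_const 2).add
    ((hu.comp continuousOn_snd fun _ hp => hp.2).div_const 2)

theorem IsExhaustion.exists_isCompact_average_le (hexh : IsExhaustion Ω u)
    (hu : ContinuousOn u Ω) (C : ℝ) : ∃ K ⊆ Ω, IsCompact K ∧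
      ∀ x ∈ Ω, ∀ y ∈ Ω, u x / 2 + u y / 2 ≤ C → x ∈ K ∧ y ∈ K := by
  rcases Ω.eq_empty_or_nonempty with rfl | hne
  · exact ⟨∅, Set.Subset.rfl, isCompact_empty, by simp⟩
  obtain ⟨z, -, hmin⟩ := hexh.exists_isMinOn hu hne
  refine ⟨_, Set.sep_subset _ _, hexh (2 * C - u z), fun x hx y hy hC => ?_⟩
  have h₁ : u z ≤ u x := hmin hx
  have h₂ : u z ≤ u y := hmin hy
  exact ⟨⟨hx, by linarith⟩, hy, by linarith⟩

theorem IsExhaustion.prod_average [T2Space X] (hexh : IsExhaustion Ω u) (hu : ContinuousOn u Ω) :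
    IsExhaustion (Ω ×ˢ Ω) fun p => u p.1 / 2 + u p.2 / 2 :=
  isExhaustion_of_subset_isCompact (continuousOn_prod_average hu) fun C => by
    obtain ⟨K, hKΩ, hK, hmem⟩ := hexh.exists_isCompact_average_le hu C
    exact ⟨K ×ˢ K, Set.prod_mono hKΩ hKΩ, hK.prod hK, fun p hp => hmem _ hp.1.1 _ hp.1.2 hp.2⟩

end Exhaustion

section LeviFrame

variable {ι H : Type*} [Fintype ι] [NormedAddCommGroup H] [NormedSpace ℂ H] {Ω : Set H}
  {u : H → ℝ} {x y z : H} {κ : ι → ℝ} {w : ι → H} {c : ℝ}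

/-- A spanning family `w` which simultaneously diagonalises the Levi forms of `u` at `x` and `y`,
normalised so that the two diagonal forms are inverse to each other. -/
structure IsLeviFrame (u : H → ℝ) (x y : H) (κ : ι → ℝ) (w : ι → H) : Prop where
  pos : ∀ i, 0 < κ i
  span : ∀ v, ∃ θ : ι → ℂ, ∑ i, θ i • w i = v
  levi_left : ∀ θ : ι → ℂ, levi u x (∑ i, θ i • w i) = ∑ i, (κ i)⁻¹ * ‖θ i‖ ^ 2
  levi_right : ∀ θ : ι → ℂ, levi u y (∑ i, θ i • w i) = ∑ i, κ i * ‖θ i‖ ^ 2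

theorem IsLeviFrame.levi_left_apply (h : IsLeviFrame u x y κ w) (i : ι) :
    levi u x (w i) = (κ i)⁻¹ := by
  classical
  simpa [Pi.single_apply, apply_ite, ite_pow] using h.levi_left (Pi.single i 1)

theorem IsLeviFrame.levi_right_apply (h : IsLeviFrame u x y κ w) (i : ι) :
    levi u y (w i) = κ i := by
  classical
  simpa [Pi.single_apply, apply_ite, ite_pow] using h.levi_right (Pi.single i 1)

theorem IsLeviFrame.levi_left_pos (h : IsLeviFrame u x y κ w) {v : H} (hv : v ≠ 0) :
    0 < levi u x v := by
  obtain ⟨θ, rfl⟩ := h.span v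
  rw [h.levi_left]
  obtain ⟨i, hi⟩ : ∃ i, θ i ≠ 0 := by
    by_contra! hθ
    exact hv (by simp [hθ])
  exact Finset.sum_pos' (fun j _ => by have := h.pos j; positivity)
    ⟨i, Finset.mem_univ i, by have := h.pos i; positivity⟩

variable (ι) in
/-- The form in which the equation `det u_{ij̄} = e^{cu}` enters the maximum principle. In a frame
normalised at `x` and `y`, the determinant of the Levi form at `z` is
`e^{c (u(z) - u(x) / 2 - u(y) / 2)}`, and by Hadamard's inequality it is at most the product of the
diagonal entries. -/
def LeviComparison (Ω : Set H) (u : H → ℝ) (c : ℝ) : Prop :=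
  ∀ x ∈ Ω, ∀ y ∈ Ω, ∃ (κ : ι → ℝ) (w : ι → H), IsLeviFrame u x y κ w ∧
    ∀ z ∈ Ω, Real.exp (c * (u z - u x / 2 - u y / 2)) ≤ ∏ i, levi u z (w i)

theorem LeviComparison.levi_pos (h : LeviComparison ι Ω u c) (hz : z ∈ Ω) {v : H} (hv : v ≠ 0) :
    0 < levi u z v := by
  obtain ⟨κ, w, hframe, -⟩ := h z hz z hz
  exact hframe.levi_left_pos hv

theorem LeviComparison.levi_nonneg (h : LeviComparison ι Ω u c) (hz : z ∈ Ω) (v : H) :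
    0 ≤ levi u z v := by
  rcases eq_or_ne v 0 with rfl | hv
  · simp [levi]
  · exact (h.levi_pos hz hv).le

end LeviFrame

section MidpointConvexity

variable {ι H : Type*} [Fintype ι] [NormedAddCommGroup H] [NormedSpace ℂ H] {Ω : Set H}
  {u : H → ℝ} {x y : H} {c : ℝ}

theorem IsExhaustion.exists_isMaxOn_twoPoint {t : ℝ} {b : H} {J : H × H → ℝ}
    {T : Set (H × H)} {C : ℝ} (hexh : IsExhaustion Ω u) (hu : ContinuousOn u Ω)
    (hJ : Continuous J) (hmem : ∀ p ∈ Ω ×ˢ Ω, t • midpoint ℝ p.1 p.2 + b ∈ Ω)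
    (hC : ∀ p ∈ (Ω ×ˢ Ω) ∩ T, J p + u (t • midpoint ℝ p.1 p.2 + b) ≤ C) (hT : IsClosed T)
    (hne : ((Ω ×ˢ Ω) ∩ T).Nonempty) :
    ∃ p ∈ (Ω ×ˢ Ω) ∩ T, IsMaxOn (twoPoint u t b J) ((Ω ×ˢ Ω) ∩ T) p := by
  have hmid : Continuous fun p : H × H => t • midpoint ℝ p.1 p.2 + b := by
    simp only [midpoint_eq_smul_add]
    fun_prop
  have hφ : ContinuousOn (fun p : H × H => J p + u (t • midpoint ℝ p.1 p.2 + b)) (Ω ×ˢ Ω) :=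
    hJ.continuousOn.add (hu.comp hmid.continuousOn hmem)
  have haverage := continuousOn_prod_average hu
  have hsub := Set.inter_subset_left (s := Ω ×ˢ Ω) (t := T)
  obtain ⟨p, hp, hmin⟩ := (((hexh.prod_average hu).inter_isClosed hT).sub_of_bddAbove
    (haverage.mono hsub) (hφ.mono hsub) hC).exists_isMinOn
      ((haverage.mono hsub).sub (hφ.mono hsub)) hne
  refine ⟨p, hp, isMaxOn_iff.2 fun q hq => ?_⟩
  have := isMinOn_iff.1 hmin q hq
  simp only [twoPoint]
  linarith

theorem LeviComparison.pow_mul_exp_le_one_of_isMaxOn {t : ℝ} {b : H}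
    (hcomp : LeviComparison ι Ω u c) (hΩ : IsOpen Ω) (hu : ContDiffOn ℝ 2 u Ω) (hx : x ∈ Ω)
    (hy : y ∈ Ω) (hz : t • midpoint ℝ x y + b ∈ Ω)
    (hmax : IsMaxOn (twoPoint u t b fun _ => 0) (Ω ×ˢ Ω) (x, y)) :
    (t ^ 2) ^ Fintype.card ι *
      Real.exp (c * (u (t • midpoint ℝ x y + b) - u x / 2 - u y / 2)) ≤ 1 := by
  have hcontDiff {z : H} (hz : z ∈ Ω) : ContDiffAt ℝ 2 u z := hu.contDiffAt (hΩ.mem_nhds hz)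
  obtain ⟨κ, w, hframe, hprod⟩ := hcomp x hx y hy
  have hlevi (i : ι) : t ^ 2 * levi u (t • midpoint ℝ x y + b) (w i) ≤ 1 := by
    have := levi_le_of_isLocalMax_twoPoint contDiffAt_const (hcontDiff hx) (hcontDiff hy)
      (hcontDiff hz) (hmax.isLocalMax ((hΩ.prod hΩ).mem_nhds ⟨hx, hy⟩)) (hframe.pos i)
      (hframe.levi_left_apply i) (hframe.levi_right_apply i)
    have hconst : levi (fun _ : H × H => (0 : ℝ)) (x, y)
        ((1 + tilt (κ i)) • w i, (1 - tilt (κ i)) • w i) = 0 := by simp [levi]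
    linarith [sq_nonneg (tilt (κ i))]
  calc _ ≤ (t ^ 2) ^ Fintype.card ι * ∏ i, levi u (t • midpoint ℝ x y + b) (w i) :=
        mul_le_mul_of_nonneg_left (hprod _ hz) (by positivity)
    _ = ∏ i, t ^ 2 * levi u (t • midpoint ℝ x y + b) (w i) := by
        rw [Finset.prod_mul_distrib, Finset.prod_const, Finset.card_univ]
    _ ≤ 1 := Finset.prod_le_one
        (fun i _ => mul_nonneg (sq_nonneg t) (hcomp.levi_nonneg hz _)) fun i _ => hlevi i

variable [ProperSpace H]

theorem exists_forall_dilation_le (hΩ : IsOpen Ω) (hbdd : Bornology.IsBounded Ω)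
    (hconv : Convex ℝ Ω) (hu : ContinuousOn u Ω) {b : H} (hb : b ∈ Ω) {t : ℝ} (ht₀ : 0 ≤ t)
    (ht₁ : t < 1) : ∃ C, ∀ z ∈ Ω, u (t • z + (1 - t) • b) ≤ C := by
  have hmem : ∀ z ∈ closure Ω, t • z + (1 - t) • b ∈ Ω := fun z hz => by
    simpa only [hΩ.interior_eq] using hconv.combo_closure_interior_mem_interior hz
      (hΩ.interior_eq.symm ▸ hb) ht₀ (sub_pos.2 ht₁) (add_sub_cancel t 1)
  obtain ⟨C, hC⟩ := hbdd.isCompact_closure.bddAbove_image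
    (hu.comp (f := fun z => t • z + (1 - t) • b) (by fun_prop) hmem)
  exact ⟨C, fun z hz => hC ⟨z, subset_closure hz, rfl⟩⟩

theorem LeviComparison.pow_mul_exp_le_one (hcomp : LeviComparison ι Ω u c) (hc : 0 < c)
    (hΩ : IsOpen Ω) (hbdd : Bornology.IsBounded Ω) (hconv : Convex ℝ Ω)
    (hu : ContDiffOn ℝ 2 u Ω) (hexh : IsExhaustion Ω u) (hx : x ∈ Ω) (hy : y ∈ Ω) {t : ℝ}
    (ht₀ : 0 ≤ t) (ht₁ : t < 1) :
    (t ^ 2) ^ Fintype.card ι * Real.exp (c * (u (midpoint ℝ x y) - u x / 2 - u y / 2)) ≤ 1 := by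
  have hmid := hconv.midpoint_mem hx hy
  have hmem : ∀ p ∈ Ω ×ˢ Ω, t • midpoint ℝ p.1 p.2 + (1 - t) • midpoint ℝ x y ∈ Ω := fun p hp =>
    hconv (hconv.midpoint_mem hp.1 hp.2) hmid ht₀ (sub_nonneg.2 ht₁.le) (add_sub_cancel t 1)
  obtain ⟨C, hC⟩ := exists_forall_dilation_le hΩ hbdd hconv hu.continuousOn hmid ht₀ ht₁
  obtain ⟨⟨x', y'⟩, hp, hmax⟩ := hexh.exists_isMaxOn_twoPoint (J := fun _ => 0) (T := Set.univ)
    hu.continuousOn continuous_const hmem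
    (fun p hp => (zero_add _).trans_le (hC _ (hconv.midpoint_mem hp.1.1 hp.1.2))) isClosed_univ
    ⟨(x, y), ⟨hx, hy⟩, Set.mem_univ _⟩
  rw [Set.inter_univ] at hmax hp
  have hle : u (midpoint ℝ x y) - u x / 2 - u y / 2 ≤
      u (t • midpoint ℝ x' y' + (1 - t) • midpoint ℝ x y) - u x' / 2 - u y' / 2 := by
    have h := isMaxOn_iff.1 hmax (x, y) ⟨hx, hy⟩
    simpa only [twoPoint, ← add_smul, add_sub_cancel, one_smul, zero_add] using h
  refine le_trans ?_
    (hcomp.pow_mul_exp_le_one_of_isMaxOn hΩ hu hp.1 hp.2 (hmem _ hp) hmax)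
  gcongr

theorem LeviComparison.midpoint_le (hcomp : LeviComparison ι Ω u c) (hc : 0 < c)
    (hΩ : IsOpen Ω) (hbdd : Bornology.IsBounded Ω) (hconv : Convex ℝ Ω)
    (hu : ContDiffOn ℝ 2 u Ω) (hexh : IsExhaustion Ω u) (hx : x ∈ Ω) (hy : y ∈ Ω) :
    u (midpoint ℝ x y) ≤ u x / 2 + u y / 2 := by
  set g := u (midpoint ℝ x y) - u x / 2 - u y / 2 with hg
  have hlim : Tendsto (fun t : ℝ => (t ^ 2) ^ Fintype.card ι * Real.exp (c * g)) (𝓝[<] 1)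
      (𝓝 (Real.exp (c * g))) := by
    have hcont : Continuous fun t : ℝ => (t ^ 2) ^ Fintype.card ι * Real.exp (c * g) := by
      fun_prop
    simpa using (hcont.tendsto 1).mono_left nhdsWithin_le_nhds
  have hexp : Real.exp (c * g) ≤ 1 := le_of_tendsto hlim <| by
    filter_upwards [Ioo_mem_nhdsLT (zero_lt_one (α := ℝ))] with t ht using
      hcomp.pow_mul_exp_le_one hc hΩ hbdd hconv hu hexh hx hy ht.1.le ht.2
  have hg₀ : g ≤ 0 := nonpos_of_mul_nonpos_right (Real.exp_le_one_iff.1 hexp) hc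
  linarith

end MidpointConvexity

section MidpointGap

variable {E : Type*} [NormedAddCommGroup E] [NormedSpace ℝ E] {u : E → ℝ} {z : E}

theorem hasDerivAt_const_mul_sq (a s : ℝ) : HasDerivAt (fun s : ℝ => a * s ^ 2) (2 * a * s) s :=
  ((hasDerivAt_pow 2 s).const_mul a).congr_deriv (by norm_num; ring)

theorem two_mul_le_fderiv_fderiv_apply {a : ℝ} (hu : ContDiffAt ℝ 2 u z) {w : E}
    (hgap : ∀ᶠ s : ℝ in 𝓝 0, a * s ^ 2 ≤ u (z + s • w) / 2 + u (z + s • -w) / 2 - u z) :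
    2 * a ≤ fderiv ℝ (fderiv ℝ u) z w w := by
  set φ : ℝ → ℝ := fun s => a * s ^ 2 - u (z + s • w) / 2 - u (z + s • -w) / 2 with hφ
  have hφ' : ∀ᶠ s : ℝ in 𝓝 0, HasDerivAt φ (2 * a * s - fderiv ℝ u (z + s • w) w / 2 -
      fderiv ℝ u (z + s • -w) (-w) / 2) s := by
    have hdiff (v : E) : ∀ᶠ s : ℝ in 𝓝 0, DifferentiableAt ℝ u (z + s • v) :=
      ((tendsto_line z v).eventually (hu.eventually (by simp))).mono fun s hs =>
        hs.differentiableAt two_ne_zero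
    filter_upwards [hdiff w, hdiff (-w)] with s hs hs'
    exact ((hasDerivAt_const_mul_sq a s).sub ((hasDerivAt_comp_line hs).div_const 2)).sub
      ((hasDerivAt_comp_line hs').div_const 2)
  have hφ'' : HasDerivAt (deriv φ) (2 * a - fderiv ℝ (fderiv ℝ u) z w w / 2 -
      fderiv ℝ (fderiv ℝ u) z (-w) (-w) / 2) 0 := by
    have hline (v : E) := hasDerivAt_fderiv_comp_line (w := v) (s := 0) (by simpa using hu)
    simp only [zero_smul, add_zero] at hline
    exact ((((hasDerivAt_id' (0 : ℝ)).const_mul (2 * a)).congr_deriv (mul_one _)).sub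
      ((hline w).div_const 2) |>.sub ((hline (-w)).div_const 2)).congr_of_eventuallyEq
        (hφ'.mono fun s hs => hs.deriv)
  have hmax : IsLocalMax φ 0 := hgap.mono fun s hs => by
    simp only [hφ, zero_smul, add_zero]
    linarith
  have := second_deriv_nonpos_of_isLocalMax hφ'.self_of_nhds.continuousAt hmax
  rw [hφ''.deriv] at this
  simp only [map_neg, _root_.neg_apply, neg_neg] at this
  linarith

theorem mul_sq_norm_sub_le_midpoint_gap {s : Set E} (hs : Convex ℝ s) {a : ℝ}
    (hu : ∀ z ∈ s, ContDiffAt ℝ 2 u z)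
    (hD : ∀ z ∈ s, ∀ w, a * ‖w‖ ^ 2 ≤ fderiv ℝ (fderiv ℝ u) z w w) {x y : E} (hx : x ∈ s)
    (hy : y ∈ s) : a / 8 * ‖x - y‖ ^ 2 ≤ u x / 2 + u y / 2 - u (midpoint ℝ x y) := by
  set w := y - x with hw
  set b := a / 2 * ‖w‖ ^ 2 with hb
  have hmem : ∀ t ∈ Set.Icc (0 : ℝ) 1, x + t • w ∈ s := fun t ht =>
    hs.add_smul_sub_mem hx hy ht
  set φ : ℝ → ℝ := fun t => u (x + t • w) - b * t ^ 2 with hφ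
  have hφ' : ∀ t ∈ Set.Icc (0 : ℝ) 1,
      HasDerivAt φ (fderiv ℝ u (x + t • w) w - 2 * b * t) t := fun t ht =>
    (hasDerivAt_comp_line ((hu _ (hmem t ht)).differentiableAt two_ne_zero)).sub
      (hasDerivAt_const_mul_sq b t)
  have hφ'' : ∀ t ∈ Set.Icc (0 : ℝ) 1, HasDerivAt (fun t =>
      fderiv ℝ u (x + t • w) w - 2 * b * t)
      (fderiv ℝ (fderiv ℝ u) (x + t • w) w w - 2 * b) t := fun t ht =>
    (hasDerivAt_fderiv_comp_line (hu _ (hmem t ht))).sub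
      (((hasDerivAt_id' t).const_mul (2 * b)).congr_deriv (mul_one _))
  have hconvex : ConvexOn ℝ (Set.Icc 0 1) φ :=
    convexOn_of_hasDerivWithinAt2_nonneg (convex_Icc 0 1)
      (fun t ht => (hφ' t ht).continuousAt.continuousWithinAt)
      (fun t ht => (hφ' t (interior_subset ht)).hasDerivWithinAt)
      (fun t ht => (hφ'' t (interior_subset ht)).hasDerivWithinAt)
      fun t ht => by linarith [hD _ (hmem t (interior_subset ht)) w]
  have hhalf := hconvex.2 (Set.left_mem_Icc.2 zero_le_one) (Set.right_mem_Icc.2 zero_le_one)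
    (one_half_pos (α := ℝ)).le (one_half_pos (α := ℝ)).le (add_halves 1)
  have hmid : x + (1 / 2 : ℝ) • w = midpoint ℝ x y := by
    rw [hw, midpoint_eq_smul_add, invOf_eq_inv]
    module
  have hend : x + w = y := add_sub_cancel x y
  simp only [hφ, smul_eq_mul, mul_zero, zero_add, mul_one, zero_smul, add_zero, one_smul, hmid,
    hend] at hhalf
  rw [norm_sub_rev]
  linarith

end MidpointGap

section StrictMidconvexity

variable {E : Type*} [NormedAddCommGroup E] [NormedSpace ℝ E] {Ω : Set E} {u : E → ℝ} {z : E}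

/-- Midpoint convexity of `u` on `Ω` with a quadratic gain, uniformly for all pairs of points, near
or far apart, whose midpoint is close to `z`. -/
def StrictMidconvexAt (Ω : Set E) (u : E → ℝ) (z : E) : Prop :=
  ∃ ε > 0, ∀ᶠ m in 𝓝 z, ∀ x ∈ Ω, ∀ y ∈ Ω, midpoint ℝ x y = m →
    ε * ‖x - y‖ ^ 2 ≤ u x / 2 + u y / 2 - u m

theorem isOpen_setOf_strictMidconvexAt : IsOpen {z | StrictMidconvexAt Ω u z} :=
  isOpen_iff_eventually.2 fun _ ⟨ε, hε, h⟩ =>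
    (eventually_eventually_nhds.2 h).mono fun _ hm => ⟨ε, hε, hm⟩

theorem StrictMidconvexAt.fderiv_fderiv_pos (h : StrictMidconvexAt Ω u z) (hΩ : Ω ∈ 𝓝 z)
    (hu : ContDiffAt ℝ 2 u z) {w : E} (hw : w ≠ 0) : 0 < fderiv ℝ (fderiv ℝ u) z w w := by
  obtain ⟨ε, hε, hgap⟩ := h
  have hle : 2 * (4 * ε * ‖w‖ ^ 2) ≤ fderiv ℝ (fderiv ℝ u) z w w := by
    refine two_mul_le_fderiv_fderiv_apply hu ?_
    filter_upwards [(tendsto_line z w).eventually hΩ, (tendsto_line z (-w)).eventually hΩ]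
      with s hs hs'
    have hmid : midpoint ℝ (z + s • w) (z + s • -w) = z := by
      rw [midpoint_eq_smul_add, invOf_eq_inv]
      module
    have hnorm : ‖z + s • w - (z + s • -w)‖ ^ 2 = 4 * ‖w‖ ^ 2 * s ^ 2 := by
      rw [show z + s • w - (z + s • -w) = (2 * s) • w by module, norm_smul, mul_pow,
        Real.norm_eq_abs, sq_abs]
      ring
    have := hgap.self_of_nhds _ hs _ hs' hmid
    rw [hnorm] at this
    linarith
  have := norm_pos_iff.2 hw
  exact lt_of_lt_of_le (by positivity) hle

theorem midpoint_gap_of_halving (hΩ : Convex ℝ Ω)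
    (hmid : ∀ x ∈ Ω, ∀ y ∈ Ω, u (midpoint ℝ x y) ≤ u x / 2 + u y / 2) {m : E} {r ε : ℝ}
    (hlocal : ∀ x ∈ Ω, ∀ y ∈ Ω, midpoint ℝ x y = m → ‖x - y‖ ≤ r →
      ε * ‖x - y‖ ^ 2 ≤ u x / 2 + u y / 2 - u m) (k : ℕ) :
    ∀ x ∈ Ω, ∀ y ∈ Ω, midpoint ℝ x y = m → ‖x - y‖ ≤ 2 ^ k * r →
      ε / 2 ^ k * ‖x - y‖ ^ 2 ≤ u x / 2 + u y / 2 - u m := by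
  induction k with
  | zero => simpa using hlocal
  | succ k ih =>
    intro x hx y hy hm hle
    have hmΩ : m ∈ Ω := hm ▸ hΩ.midpoint_mem hx hy
    have hhalf : midpoint ℝ x m - midpoint ℝ y m = (1 / 2 : ℝ) • (x - y) := by
      rw [midpoint_eq_smul_add, midpoint_eq_smul_add, invOf_eq_inv]
      module
    have hmid_half : midpoint ℝ (midpoint ℝ x m) (midpoint ℝ y m) = m := by
      rw [← hm]
      simp only [midpoint_eq_smul_add, invOf_eq_inv]
      module
    have hnorm : ‖midpoint ℝ x m - midpoint ℝ y m‖ = ‖x - y‖ / 2 := by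
      rw [hhalf, norm_smul, Real.norm_of_nonneg one_half_pos.le]
      ring
    have hgap := ih _ (hΩ.midpoint_mem hx hmΩ) _ (hΩ.midpoint_mem hy hmΩ) hmid_half
      (by rw [hnorm]; rw [pow_succ] at hle; linarith)
    have hx' := hmid x hx m hmΩ
    have hy' := hmid y hy m hmΩ
    have hscale : ε / 2 ^ k * (‖x - y‖ / 2) ^ 2 = ε / 2 ^ (k + 1) * ‖x - y‖ ^ 2 / 2 := by
      rw [pow_succ (2 : ℝ) k, ← div_div]
      ring
    rw [hnorm, hscale] at hgap
    linarith

theorem eventually_mul_sq_norm_le_fderiv_fderiv (hu : ContDiffAt ℝ 2 u z) {a b : ℝ}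
    (hab : a < b) (hD : ∀ w, b * ‖w‖ ^ 2 ≤ fderiv ℝ (fderiv ℝ u) z w w) :
    ∀ᶠ x in 𝓝 z, ∀ w, a * ‖w‖ ^ 2 ≤ fderiv ℝ (fderiv ℝ u) x w w := by
  have hcont : ContinuousAt (fderiv ℝ (fderiv ℝ u)) z :=
    ((hu.fderiv_right (m := 1) le_rfl).fderiv_right (m := 0) le_rfl).continuousAt
  have hdist := (tendsto_iff_norm_sub_tendsto_zero (E := E →L[ℝ] E →L[ℝ] ℝ)).1 hcont
  filter_upwards [hdist.eventually_lt_const (sub_pos.2 hab)] with x hx w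
  have hnorm := (fderiv ℝ (fderiv ℝ u) x - fderiv ℝ (fderiv ℝ u) z).le_of_opNorm₂_le_of_le
    hx.le (le_refl ‖w‖) (le_refl ‖w‖)
  rw [_root_.sub_apply, _root_.sub_apply, Real.norm_eq_abs] at hnorm
  linarith [(abs_le.1 hnorm).1, hD w]

theorem strictMidconvexAt_of_fderiv_fderiv (hΩ : IsOpen Ω) (hbdd : Bornology.IsBounded Ω)
    (hconv : Convex ℝ Ω) (hu : ContDiffOn ℝ 2 u Ω)
    (hmid : ∀ x ∈ Ω, ∀ y ∈ Ω, u (midpoint ℝ x y) ≤ u x / 2 + u y / 2) (hz : z ∈ Ω) {a : ℝ}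
    (ha : 0 < a) (hD : ∀ w, a * ‖w‖ ^ 2 ≤ fderiv ℝ (fderiv ℝ u) z w w) :
    StrictMidconvexAt Ω u z := by
  obtain ⟨r, hr, hball⟩ := Metric.eventually_nhds_iff_ball.1 <| (hΩ.eventually_mem hz).and <|
    eventually_mul_sq_norm_le_fderiv_fderiv (hu.contDiffAt (hΩ.mem_nhds hz)) (half_lt_self ha) hD
  obtain ⟨B, hB⟩ := hbdd.exists_norm_le
  obtain ⟨k, hk⟩ := pow_unbounded_of_one_lt (2 * B / r) one_lt_two
  refine ⟨a / 2 / 8 / 2 ^ k, by positivity, ?_⟩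
  filter_upwards [Metric.ball_mem_nhds z (half_pos hr)] with m hm x hx y hy hxy
  refine midpoint_gap_of_halving hconv hmid (r := r) (fun x _ y _ hxy hle => ?_) k x hx y hy hxy ?_
  · have hmem {p : E} (hp : dist p m = ‖(2 : ℝ)‖⁻¹ * dist x y) : p ∈ Metric.ball z r := by
      rw [Real.norm_two, dist_eq_norm x y] at hp
      have := dist_triangle p m z
      rw [Metric.mem_ball] at hm ⊢
      linarith
    rw [← hxy] at hmem ⊢
    exact mul_sq_norm_sub_le_midpoint_gap (convex_ball z r)
      (fun z hz => hu.contDiffAt (hΩ.mem_nhds (hball z hz).1)) (fun z hz => (hball z hz).2)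
      (hmem (dist_left_midpoint x y)) (hmem (dist_right_midpoint x y))
  · rw [div_lt_iff₀ hr] at hk
    linarith [norm_sub_le x y, hB x hx, hB y hy]

end StrictMidconvexity

section ExistsStrict

variable {H : Type*} [NormedAddCommGroup H] [InnerProductSpace ℝ H] {Ω : Set H} {u : H → ℝ}

theorem IsExhaustion.exists_two_mul_sq_norm_le_fderiv_fderiv (hexh : IsExhaustion Ω u)
    (hΩ : IsOpen Ω) (hbdd : Bornology.IsBounded Ω) (hu : ContDiffOn ℝ 2 u Ω)
    (hne : Ω.Nonempty) : ∃ z ∈ Ω, ∀ w, 2 * ‖w‖ ^ 2 ≤ fderiv ℝ (fderiv ℝ u) z w w := by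
  obtain ⟨B, hB⟩ := hbdd.exists_norm_le
  have hsq : ContinuousOn (fun z : H => ‖z‖ ^ 2) Ω := by fun_prop
  obtain ⟨z, hz, hmin⟩ := (hexh.sub_of_bddAbove hu.continuousOn hsq (C := B ^ 2)
    fun z hz => by gcongr; exact hB z hz).exists_isMinOn (hu.continuousOn.sub hsq) hne
  refine ⟨z, hz, fun w => ?_⟩
  refine two_mul_le_fderiv_fderiv_apply (hu.contDiffAt (hΩ.mem_nhds hz)) ?_
  filter_upwards [(tendsto_line z w).eventually (hΩ.mem_nhds hz),
    (tendsto_line z (-w)).eventually (hΩ.mem_nhds hz)] with s hs hs'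
  have h₁ := isMinOn_iff.1 hmin _ hs
  have h₂ := isMinOn_iff.1 hmin _ hs'
  have hpar := parallelogram_law_with_norm ℝ z (s • w)
  have hnorm : ‖s • w‖ ^ 2 = ‖w‖ ^ 2 * s ^ 2 := by
    rw [norm_smul, mul_pow, Real.norm_eq_abs, sq_abs, mul_comm]
  rw [smul_neg, ← sub_eq_add_neg] at h₂ ⊢
  nlinarith

end ExistsStrict

section Barrier

variable {E : Type*} [NormedAddCommGroup E] {z₀ : E} {ε α R : ℝ}

/-- The Gaussian `e^{-α |m - z₀|²}`. -/
def gaussian (α : ℝ) (z₀ m : E) : ℝ := Real.exp (-α * ‖m - z₀‖ ^ 2)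

theorem gaussian_le_one (hα : 0 ≤ α) (m : E) : gaussian α z₀ m ≤ 1 :=
  Real.exp_le_one_iff.2 (by nlinarith [sq_nonneg ‖m - z₀‖])

variable [NormedSpace ℝ E]

/-- Hopf's barrier, with the Gaussian evaluated at the midpoint of a pair and weighted by the
squared distance of its points. It vanishes when the midpoint lies on the sphere of radius `R`
about `z₀`. -/
def barrier (ε α R : ℝ) (z₀ : E) (p : E × E) : ℝ :=
  ε * ((gaussian α z₀ (midpoint ℝ p.1 p.2) - Real.exp (-α * R ^ 2)) * ‖p.1 - p.2‖ ^ 2)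

theorem barrier_le_gaussian (hε : 0 ≤ ε) (p : E × E) :
    barrier ε α R z₀ p ≤ ε * gaussian α z₀ (midpoint ℝ p.1 p.2) * ‖p.1 - p.2‖ ^ 2 := by
  rw [barrier, mul_assoc]
  gcongr
  linarith [Real.exp_pos (-α * R ^ 2)]

theorem barrier_le (hε : 0 ≤ ε) (hα : 0 ≤ α) (p : E × E) :
    barrier ε α R z₀ p ≤ ε * ‖p.1 - p.2‖ ^ 2 := by
  refine (barrier_le_gaussian hε p).trans ?_
  gcongr
  exact mul_le_of_le_one_right hε (gaussian_le_one hα _)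

theorem barrier_eq_zero {p : E × E} (h : dist (midpoint ℝ p.1 p.2) z₀ = R) :
    barrier ε α R z₀ p = 0 := by
  simp [barrier, gaussian, ← dist_eq_norm, h]

end Barrier

section BarrierDerivative

variable {E : Type*} [NormedAddCommGroup E] [InnerProductSpace ℝ E] {x y z₀ : E} {ε α R : ℝ}

theorem contDiff_barrier : ContDiff ℝ 2 (barrier ε α R z₀) := by
  have hmid : ContDiff ℝ 2 fun p : E × E => midpoint ℝ p.1 p.2 - z₀ := by
    simp only [midpoint_eq_smul_add]
    fun_prop
  exact contDiff_const.mul ((((contDiff_const.mul (hmid.norm_sq ℝ)).exp.sub contDiff_const)).mul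
    ((contDiff_fst.sub contDiff_snd).norm_sq ℝ))

theorem norm_add_smul_sq (a v : E) (r : ℝ) :
    ‖a + r • v‖ ^ 2 = ‖a‖ ^ 2 + 2 * inner ℝ a v * r + ‖v‖ ^ 2 * r ^ 2 := by
  rw [norm_add_sq_real, inner_smul_right, norm_smul, mul_pow, Real.norm_eq_abs, sq_abs]
  ring

theorem deriv_deriv_exp_sub_mul {q r : ℝ → ℝ} {q₁ q₂ r₁ r₂ : ℝ} (b : ℝ)
    (hq : ∀ s, HasDerivAt q (q₁ + 2 * q₂ * s) s) (hr : ∀ s, HasDerivAt r (r₁ + 2 * r₂ * s) s) :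
    deriv (deriv fun s => (Real.exp (q s) - b) * r s) 0 =
      Real.exp (q 0) * (q₁ ^ 2 + 2 * q₂) * r 0 + 2 * (Real.exp (q 0) * q₁ * r₁) +
        (Real.exp (q 0) - b) * (2 * r₂) := by
  have hlin (c d : ℝ) : HasDerivAt (fun s => c + 2 * d * s) (2 * d) 0 := by
    simpa using ((hasDerivAt_id (0 : ℝ)).const_mul (2 * d)).const_add c
  have hfirst : (deriv fun s => (Real.exp (q s) - b) * r s) = fun s =>
      Real.exp (q s) * (q₁ + 2 * q₂ * s) * r s + (Real.exp (q s) - b) * (r₁ + 2 * r₂ * s) :=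
    funext fun s => (((hq s).exp.sub_const b).mul (hr s)).deriv
  rw [hfirst]
  refine HasDerivAt.deriv (HasDerivAt.congr_deriv ((((hq 0).exp.mul (hlin q₁ q₂)).mul (hr 0)).add
    (((hq 0).exp.sub_const b).mul (hlin r₁ r₂))) ?_)
  simp only [Pi.mul_apply, mul_zero, add_zero]
  ring

theorem fderiv_fderiv_barrier (x y v : E) (ν : ℝ) :
    fderiv ℝ (fderiv ℝ (barrier ε α R z₀)) (x, y)
        ((1 + ν) • v, (1 - ν) • v) ((1 + ν) • v, (1 - ν) • v) =
      ε * (gaussian α z₀ (midpoint ℝ x y) *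
          (4 * α ^ 2 * inner ℝ (midpoint ℝ x y - z₀) v ^ 2 - 2 * α * ‖v‖ ^ 2) * ‖x - y‖ ^ 2 -
        16 * α * ν * gaussian α z₀ (midpoint ℝ x y) * inner ℝ (midpoint ℝ x y - z₀) v *
          inner ℝ (x - y) v +
        8 * ν ^ 2 * (gaussian α z₀ (midpoint ℝ x y) - Real.exp (-α * R ^ 2)) * ‖v‖ ^ 2) := by
  set a := midpoint ℝ x y - z₀ with ha
  have hquad (k l m s : ℝ) : HasDerivAt (fun s => k + l * s + m * s ^ 2) (l + 2 * m * s) s :=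
    (((hasDerivAt_id s).const_mul l).const_add k |>.add
      ((hasDerivAt_pow 2 s).const_mul m)).congr_deriv (by simp; ring)
  have hline : (fun s : ℝ => barrier ε α R z₀ ((x, y) + s • ((1 + ν) • v, (1 - ν) • v))) =
      fun s => ε * ((Real.exp (-α * ‖a‖ ^ 2 + -α * (2 * inner ℝ a v) * s + -α * ‖v‖ ^ 2 * s ^ 2) -
        Real.exp (-α * R ^ 2)) * (‖x - y‖ ^ 2 + 4 * ν * inner ℝ (x - y) v * s +
          4 * ν ^ 2 * ‖v‖ ^ 2 * s ^ 2)) := by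
    ext s
    have hmid : midpoint ℝ (x + s • (1 + ν) • v) (y + s • (1 - ν) • v) - z₀ = a + s • v := by
      rw [ha, midpoint_eq_smul_add, midpoint_eq_smul_add, invOf_eq_inv]
      module
    have hsub : x + s • (1 + ν) • v - (y + s • (1 - ν) • v) = (x - y) + (2 * ν * s) • v := by
      module
    simp only [barrier, gaussian, Prod.smul_mk, Prod.mk_add_mk, hmid, hsub, norm_add_smul_sq]
    ring_nf
  rw [fderiv_fderiv_apply_eq_deriv_deriv contDiff_barrier.contDiffAt, hline]
  simp only [deriv_const_mul_field']
  rw [deriv_deriv_exp_sub_mul _ (hquad _ _ _) (hquad _ _ _), gaussian, ← ha]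
  ring_nf

/-- The cross term is absorbed by half of the loss `-ν² / 2` and half of the Gaussian's gain. -/
theorem neg_sq_sub_fderiv_fderiv_barrier_le (hε : 0 ≤ ε) (hα : 0 ≤ α) {v : E}
    (hv : 32 * ε * ‖v‖ ^ 2 ≤ 1) (hR : dist (midpoint ℝ x y) z₀ ≤ R) (ν : ℝ) :
    -ν ^ 2 - fderiv ℝ (fderiv ℝ (barrier ε α R z₀)) (x, y)
        ((1 + ν) • v, (1 - ν) • v) ((1 + ν) • v, (1 - ν) • v) ≤
      ε * gaussian α z₀ (midpoint ℝ x y) * ‖x - y‖ ^ 2 *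
        (2 * α * ‖v‖ ^ 2 - 2 * α ^ 2 * inner ℝ (midpoint ℝ x y - z₀) v ^ 2) := by
  rw [fderiv_fderiv_barrier]
  have he₁ := gaussian_le_one (z₀ := z₀) hα (midpoint ℝ x y)
  have hh : Real.exp (-α * R ^ 2) ≤ gaussian α z₀ (midpoint ℝ x y) := by
    rw [gaussian, ← dist_eq_norm]
    simp only [neg_mul]
    gcongr
  have he₀ : 0 < gaussian α z₀ (midpoint ℝ x y) := Real.exp_pos _
  have hCS : inner ℝ (x - y) v ^ 2 ≤ ‖x - y‖ ^ 2 * ‖v‖ ^ 2 := by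
    rw [← mul_pow, sq_le_sq, abs_of_nonneg (by positivity : 0 ≤ ‖x - y‖ * ‖v‖)]
    exact abs_real_inner_le_norm _ _
  generalize gaussian α z₀ (midpoint ℝ x y) = e at *
  generalize inner ℝ (midpoint ℝ x y - z₀) v = P at *
  generalize inner ℝ (x - y) v = X at *
  have hh' : 0 ≤ 8 * ε * ν ^ 2 * (e - Real.exp (-α * R ^ 2)) * ‖v‖ ^ 2 := by
    have := sub_nonneg.2 hh
    positivity
  have hsquare : -ν ^ 2 + 16 * ε * α * ν * e * P * X ≤ 64 * (ε * α * e * P) ^ 2 * X ^ 2 := by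
    nlinarith [sq_nonneg (ν - 8 * ε * α * e * P * X)]
  have habsorb : 64 * (ε * α * e * P) ^ 2 * X ^ 2 ≤
      2 * ε * α ^ 2 * e * P ^ 2 * ‖x - y‖ ^ 2 := calc
    _ ≤ 64 * (ε * α * e * P) ^ 2 * (‖x - y‖ ^ 2 * ‖v‖ ^ 2) := by gcongr
    _ = 2 * ε * α ^ 2 * e * P ^ 2 * ‖x - y‖ ^ 2 * (32 * ε * ‖v‖ ^ 2 * e) := by ring
    _ ≤ _ := mul_le_of_le_one_right (by positivity) (mul_le_one₀ hv he₀.le he₁)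
  linarith

end BarrierDerivative

section LeviBarrier

variable {H : Type*} [NormedAddCommGroup H] [InnerProductSpace ℂ H] {x y z₀ : H} {ε α R : ℝ}

theorem neg_sq_sub_levi_barrier_le (hε : 0 ≤ ε) (hα : 0 ≤ α) {w : H}
    (hw : 32 * ε * ‖w‖ ^ 2 ≤ 1) (hR : dist (midpoint ℝ x y) z₀ ≤ R) (ν : ℝ) :
    -ν ^ 2 / 2 - levi (barrier ε α R z₀) (x, y) ((1 + ν) • w, (1 - ν) • w) ≤
      ε * gaussian α z₀ (midpoint ℝ x y) * ‖x - y‖ ^ 2 *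
        (α * ‖w‖ ^ 2 - α ^ 2 / 2 * ‖inner ℂ (midpoint ℝ x y - z₀) w‖ ^ 2) := by
  let : InnerProductSpace ℝ H := InnerProductSpace.complexToReal
  have hI : ‖Complex.I • w‖ = ‖w‖ := by simp [norm_smul]
  have hinner (a : H) : inner ℝ a w ^ 2 + inner ℝ a (Complex.I • w) ^ 2 = ‖inner ℂ a w‖ ^ 2 := by
    rw [real_inner_eq_re_inner ℂ, real_inner_eq_re_inner ℂ, inner_smul_right, Complex.sq_norm,
      Complex.normSq_apply]
    simp
    ring
  have h₁ := neg_sq_sub_fderiv_fderiv_barrier_le hε hα hw hR ν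
  have h₂ := neg_sq_sub_fderiv_fderiv_barrier_le hε hα (v := Complex.I • w) (by rwa [hI]) hR ν
  rw [hI] at h₂
  rw [levi, Prod.smul_mk, smul_comm Complex.I (1 + ν), smul_comm Complex.I (1 - ν), ← hinner]
  linarith

end LeviBarrier

section Pinching

variable {ι H : Type*} [Fintype ι] [NormedAddCommGroup H] [NormedSpace ℂ H] {Ω : Set H}
  {u : H → ℝ} {x y : H} {c μ Λ : ℝ} {κ : ι → ℝ} {w : ι → H}

/-- The Levi form of `u` at `x` lies between `μ |v|²` and `Λ |v|²`. -/
def IsLeviPinched (u : H → ℝ) (μ Λ : ℝ) (x : H) : Prop :=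
  ∀ v, μ * ‖v‖ ^ 2 ≤ levi u x v ∧ levi u x v ≤ Λ * ‖v‖ ^ 2

theorem isLeviPinched_of_forall_mem_sphere
    (h : ∀ v ∈ Metric.sphere (0 : H) 1, μ ≤ levi u x v ∧ levi u x v ≤ Λ) :
    IsLeviPinched u μ Λ x := fun v => by
  rcases eq_or_ne v 0 with rfl | hv
  · simp [levi]
  have hscale : levi u x v = ‖v‖ ^ 2 * levi u x (‖v‖⁻¹ • v) := by
    rw [← levi_real_smul, smul_inv_smul₀ (norm_ne_zero_iff.2 hv)]
  obtain ⟨hμ, hΛ⟩ := h (‖v‖⁻¹ • v) (by simp [norm_smul, hv])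
  rw [hscale, mul_comm μ, mul_comm Λ]
  exact ⟨by gcongr, by gcongr⟩

theorem continuousOn_levi (hΩ : IsOpen Ω) (hu : ContDiffOn ℝ 2 u Ω) :
    ContinuousOn (fun p : H × H => levi u p.1 p.2) (Ω ×ˢ Set.univ) := by
  have hD : ContinuousOn (fderiv ℝ (fderiv ℝ u)) Ω :=
    ((hu.fderiv_of_isOpen hΩ (m := 1) le_rfl).fderiv_of_isOpen hΩ (m := 0) le_rfl).continuousOn
  have hfst : ContinuousOn (fun p : H × H => fderiv ℝ (fderiv ℝ u) p.1) (Ω ×ˢ Set.univ) :=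
    hD.comp continuousOn_fst fun p hp => hp.1
  have hI : Continuous fun p : H × H => Complex.I • p.2 := by fun_prop
  exact (((hfst.clm_apply continuousOn_snd).clm_apply continuousOn_snd).add
    ((hfst.clm_apply hI.continuousOn).clm_apply hI.continuousOn)).div_const 4

theorem LeviComparison.exists_isLeviPinched [ProperSpace H] (hcomp : LeviComparison ι Ω u c)
    (hΩ : IsOpen Ω) (hu : ContDiffOn ℝ 2 u Ω) {K : Set H} (hK : IsCompact K) (hKΩ : K ⊆ Ω) :
    ∃ μ > 0, ∃ Λ > 0, ∀ x ∈ K, IsLeviPinched u μ Λ x := by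
  have hcompact : IsCompact (K ×ˢ Metric.sphere (0 : H) 1) := hK.prod (isCompact_sphere 0 1)
  have hcont : ContinuousOn (fun p : H × H => levi u p.1 p.2) (K ×ˢ Metric.sphere 0 1) :=
    (continuousOn_levi hΩ hu).mono (Set.prod_mono hKΩ (Set.subset_univ _))
  obtain ⟨μ, hμ, hlower⟩ := hcompact.exists_forall_le' hcont (a := 0) fun p hp =>
    hcomp.levi_pos (hKΩ hp.1) (ne_zero_of_mem_unit_sphere ⟨p.2, hp.2⟩)
  obtain ⟨Λ, hupper⟩ := hcompact.bddAbove_image hcont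
  refine ⟨μ, hμ, max Λ 1, by positivity, fun x hx =>
    isLeviPinched_of_forall_mem_sphere fun v hv => ⟨hlower (x, v) ⟨hx, hv⟩, ?_⟩⟩
  exact le_max_of_le_left (hupper ⟨(x, v), ⟨hx, hv⟩, rfl⟩)

theorem IsLeviFrame.mul_sq_norm_le_one (hframe : IsLeviFrame u x y κ w) (hμ : 0 ≤ μ)
    (hx : IsLeviPinched u μ Λ x) (hy : IsLeviPinched u μ Λ y) (i : ι) : μ * ‖w i‖ ^ 2 ≤ 1 := by
  have h₁ := (hx (w i)).1
  have h₂ := (hy (w i)).1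
  rw [hframe.levi_left_apply] at h₁
  rw [hframe.levi_right_apply] at h₂
  have hprod := mul_le_mul h₁ h₂ (by positivity) (inv_nonneg.2 (hframe.pos i).le)
  rw [inv_mul_cancel₀ (hframe.pos i).ne'] at hprod
  nlinarith

end Pinching

section FrameSize

variable {ι H : Type*} [Fintype ι] [NormedAddCommGroup H] [InnerProductSpace ℂ H]
  {u : H → ℝ} {x y : H} {μ Λ : ℝ} {κ : ι → ℝ} {w : ι → H}

theorem IsLeviFrame.mul_sq_norm_le_sum_sq_norm_inner (hframe : IsLeviFrame u x y κ w)
    (hμ : 0 < μ) (hΛ : 0 < Λ) (hx : IsLeviPinched u μ Λ x) (hy : IsLeviPinched u μ Λ y) (a : H) :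
    μ / Λ ^ 2 * ‖a‖ ^ 2 ≤ ∑ i, ‖inner ℂ a (w i)‖ ^ 2 := by
  obtain ⟨θ, hθ⟩ := hframe.span a
  have hnorm : ‖a‖ ^ 2 ≤ ∑ i, ‖θ i‖ * ‖inner ℂ a (w i)‖ := calc
    ‖a‖ ^ 2 = ‖inner ℂ a (∑ i, θ i • w i)‖ := by
      rw [hθ, inner_self_eq_norm_sq_to_K]
      simp
    _ ≤ ∑ i, ‖θ i * inner ℂ a (w i)‖ := by
      simp only [inner_sum, inner_smul_right]
      exact norm_sum_le _ _
    _ = _ := by simp only [norm_mul]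
  have hκ (i : ι) : κ i ≤ Λ / μ := by
    rw [le_div_iff₀ hμ, ← hframe.levi_right_apply i]
    calc levi u y (w i) * μ ≤ Λ * ‖w i‖ ^ 2 * μ := by gcongr; exact (hy (w i)).2
      _ = Λ * (μ * ‖w i‖ ^ 2) := by ring
      _ ≤ Λ := mul_le_of_le_one_right hΛ.le (hframe.mul_sq_norm_le_one hμ.le hx hy i)
  have hsum : (‖a‖ ^ 2) ^ 2 ≤ Λ * ‖a‖ ^ 2 * (Λ / μ * ∑ i, ‖inner ℂ a (w i)‖ ^ 2) := calc
    (‖a‖ ^ 2) ^ 2 ≤ (∑ i, ‖θ i‖ * ‖inner ℂ a (w i)‖) ^ 2 := by gcongr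
    _ ≤ (∑ i, (κ i)⁻¹ * ‖θ i‖ ^ 2) * ∑ i, κ i * ‖inner ℂ a (w i)‖ ^ 2 := by
      refine Finset.sum_sq_le_sum_mul_sum_of_sq_le_mul _ ?_ ?_ ?_
      · exact fun i _ => mul_nonneg (inv_nonneg.2 (hframe.pos i).le) (sq_nonneg _)
      · exact fun i _ => mul_nonneg (hframe.pos i).le (sq_nonneg _)
      · intro i _
        rw [mul_mul_mul_comm, inv_mul_cancel₀ (hframe.pos i).ne', one_mul, mul_pow]
    _ ≤ Λ * ‖a‖ ^ 2 * (Λ / μ * ∑ i, ‖inner ℂ a (w i)‖ ^ 2) := by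
      rw [← hframe.levi_left, hθ, Finset.mul_sum _ _ (Λ / μ)]
      gcongr
      · exact Finset.sum_nonneg fun i _ => mul_nonneg (hframe.pos i).le (sq_nonneg _)
      · exact (hx a).2
      · exact hκ _
  rcases eq_or_ne a 0 with rfl | ha
  · simp
  have hpos : 0 < ‖a‖ ^ 2 := by positivity
  have hcancel : ‖a‖ ^ 2 ≤ Λ * (Λ / μ * ∑ i, ‖inner ℂ a (w i)‖ ^ 2) :=
    le_of_mul_le_mul_left (by linarith) hpos
  calc μ / Λ ^ 2 * ‖a‖ ^ 2 ≤ μ / Λ ^ 2 * (Λ * (Λ / μ * ∑ i, ‖inner ℂ a (w i)‖ ^ 2)) := by gcongr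
    _ = _ := by field_simp

end FrameSize

section TwoPointComparison

variable {ι H : Type*} [Fintype ι] [NormedAddCommGroup H] [InnerProductSpace ℂ H] {Ω : Set H}
  {u : H → ℝ} {x y z₀ : H} {c μ Λ ε α ρ R : ℝ} {κ : ι → ℝ} {w : ι → H}

theorem IsLeviFrame.sum_neg_sq_sub_levi_barrier_le (hframe : IsLeviFrame u x y κ w)
    (hμ : 0 < μ) (hΛ : 0 < Λ) (hx : IsLeviPinched u μ Λ x) (hy : IsLeviPinched u μ Λ y)
    (hε : 0 ≤ ε) (hεμ : 32 * ε ≤ μ) (hα : 0 ≤ α) (hR : dist (midpoint ℝ x y) z₀ ≤ R)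
    (ν : ι → ℝ) :
    ∑ i, (-ν i ^ 2 / 2 - levi (barrier ε α R z₀) (x, y) ((1 + ν i) • w i, (1 - ν i) • w i)) ≤
      ε * gaussian α z₀ (midpoint ℝ x y) * ‖x - y‖ ^ 2 * (α * (Fintype.card ι / μ) -
        α ^ 2 / 2 * (μ / Λ ^ 2 * dist (midpoint ℝ x y) z₀ ^ 2)) := by
  have hw (i : ι) := hframe.mul_sq_norm_le_one hμ.le hx hy i
  have hgauss : 0 ≤ gaussian α z₀ (midpoint ℝ x y) := (Real.exp_pos _).le
  have hnorm : ∑ i, ‖w i‖ ^ 2 ≤ Fintype.card ι / μ := by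
    rw [div_eq_mul_inv, ← nsmul_eq_mul, ← Finset.card_univ]
    exact Finset.sum_le_card_nsmul _ _ _ fun i _ => (le_inv_mul_iff₀ hμ).2 (hw i) |>.trans_eq
      (mul_one _)
  calc _ ≤ ∑ i, ε * gaussian α z₀ (midpoint ℝ x y) * ‖x - y‖ ^ 2 *
        (α * ‖w i‖ ^ 2 - α ^ 2 / 2 * ‖inner ℂ (midpoint ℝ x y - z₀) (w i)‖ ^ 2) :=
      Finset.sum_le_sum fun i _ => neg_sq_sub_levi_barrier_le hε hα
        ((mul_le_mul_of_nonneg_right hεμ (sq_nonneg _)).trans (hw i)) hR (ν i)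
    _ = ε * gaussian α z₀ (midpoint ℝ x y) * ‖x - y‖ ^ 2 * (α * ∑ i, ‖w i‖ ^ 2 -
        α ^ 2 / 2 * ∑ i, ‖inner ℂ (midpoint ℝ x y - z₀) (w i)‖ ^ 2) := by
      simp only [← Finset.mul_sum, Finset.sum_sub_distrib]
    _ ≤ _ := by
      rw [dist_eq_norm]
      gcongr
      exact hframe.mul_sq_norm_le_sum_sq_norm_inner hμ hΛ hx hy _

theorem LeviComparison.mul_le_sum_of_isLocalMax_twoPoint (hcomp : LeviComparison ι Ω u c)
    (hΩ : IsOpen Ω) (hu : ContDiffOn ℝ 2 u Ω) {J : H × H → ℝ} (hJ : ContDiffAt ℝ 2 J (x, y))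
    (hx : x ∈ Ω) (hy : y ∈ Ω) (hm : midpoint ℝ x y ∈ Ω)
    (hmax : IsLocalMax (twoPoint u 1 0 J) (x, y)) :
    ∃ (κ : ι → ℝ) (w : ι → H), IsLeviFrame u x y κ w ∧
      c * (u (midpoint ℝ x y) - u x / 2 - u y / 2) ≤ ∑ i, (-tilt (κ i) ^ 2 / 2 -
        levi J (x, y) ((1 + tilt (κ i)) • w i, (1 - tilt (κ i)) • w i)) := by
  have hcontDiff {z : H} (hz : z ∈ Ω) : ContDiffAt ℝ 2 u z := hu.contDiffAt (hΩ.mem_nhds hz)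
  obtain ⟨κ, w, hframe, hprod⟩ := hcomp x hx y hy
  refine ⟨κ, w, hframe, Real.exp_le_exp.1 ((hprod _ hm).trans ?_)⟩
  rw [Real.exp_sum]
  refine Finset.prod_le_prod (fun i _ => hcomp.levi_nonneg hm _) fun i _ => ?_
  have hle := levi_le_of_isLocalMax_twoPoint hJ (hcontDiff hx) (hcontDiff hy)
    (by simpa using hcontDiff hm) hmax (hframe.pos i) (hframe.levi_left_apply i)
    (hframe.levi_right_apply i)
  simp only [one_pow, one_mul, one_smul, add_zero] at hle
  refine le_trans ?_ (Real.add_one_le_exp _)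
  linarith

theorem LeviComparison.twoPoint_barrier_nonpos_of_isLocalMax (hcomp : LeviComparison ι Ω u c)
    (hc : 0 ≤ c) (hΩ : IsOpen Ω) (hu : ContDiffOn ℝ 2 u Ω) (hx : x ∈ Ω) (hy : y ∈ Ω)
    (hm : midpoint ℝ x y ∈ Ω) (hμ : 0 < μ) (hΛ : 0 < Λ) (hpx : IsLeviPinched u μ Λ x)
    (hpy : IsLeviPinched u μ Λ y) (hε : 0 < ε) (hεμ : 32 * ε ≤ μ) (hα : 0 ≤ α) (hρ : 0 ≤ ρ)
    (hαρ : c + α * (Fintype.card ι / μ) < α ^ 2 / 2 * (μ / Λ ^ 2 * ρ ^ 2))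
    (hm₁ : ρ ≤ dist (midpoint ℝ x y) z₀) (hm₂ : dist (midpoint ℝ x y) z₀ ≤ R)
    (hmax : IsLocalMax (twoPoint u 1 0 (barrier ε α R z₀)) (x, y)) :
    twoPoint u 1 0 (barrier ε α R z₀) (x, y) ≤ 0 := by
  rcases eq_or_ne x y with rfl | hxy
  · simp [twoPoint, barrier]
  by_contra! hpos
  let : InnerProductSpace ℝ H := InnerProductSpace.complexToReal
  obtain ⟨κ, w, hframe, hle⟩ := hcomp.mul_le_sum_of_isLocalMax_twoPoint hΩ hu
    contDiff_barrier.contDiffAt hx hy hm hmax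
  have hsum := hle.trans (hframe.sum_neg_sq_sub_levi_barrier_le hμ hΛ hpx hpy hε.le hεμ hα hm₂ _)
  have hgain : 0 < ε * gaussian α z₀ (midpoint ℝ x y) * ‖x - y‖ ^ 2 := by
    have := norm_pos_iff.2 (sub_ne_zero.2 hxy)
    have : 0 < gaussian α z₀ (midpoint ℝ x y) := Real.exp_pos _
    positivity
  have hgap : -(ε * gaussian α z₀ (midpoint ℝ x y) * ‖x - y‖ ^ 2) ≤
      u (midpoint ℝ x y) - u x / 2 - u y / 2 := by
    have := barrier_le_gaussian (R := R) (α := α) (z₀ := z₀) hε.le (x, y)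
    simp only [twoPoint, one_smul, add_zero] at hpos
    linarith
  have hρ' : α ^ 2 / 2 * (μ / Λ ^ 2 * ρ ^ 2) ≤
      α ^ 2 / 2 * (μ / Λ ^ 2 * dist (midpoint ℝ x y) z₀ ^ 2) := by gcongr
  have hneg := mul_le_mul_of_nonneg_left hgap hc
  have hlt := mul_lt_mul_of_pos_left (hαρ.trans_le hρ') hgain
  linarith

theorem exists_pos_add_mul_lt_sq_mul (a b : ℝ) {d : ℝ} (hd : 0 < d) :
    ∃ α > (0 : ℝ), a + α * b < α ^ 2 / 2 * d := by
  have hlim : Tendsto (fun α : ℝ => α * (α * (d / 2) - b)) atTop atTop :=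
    tendsto_id.atTop_mul_atTop₀ <|
      tendsto_atTop_add_const_right _ _ (tendsto_id.atTop_mul_const (half_pos hd))
  obtain ⟨α, hα, hlt⟩ := ((eventually_gt_atTop 0).and (hlim.eventually_gt_atTop a)).exists
  exact ⟨α, hα, by linarith⟩

end TwoPointComparison

section Propagation

variable {ι H : Type*} [Fintype ι] [NormedAddCommGroup H] [InnerProductSpace ℂ H]
  {Ω : Set H} {u : H → ℝ} {x y z z₀ : H} {c ε α μ Λ ρ R C : ℝ}

theorem StrictMidconvexAt.of_barrier_le_gap (hε : 0 < ε) (hα : 0 < α)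
    (hgap : ∀ x ∈ Ω, ∀ y ∈ Ω, midpoint ℝ x y ∈ Metric.closedBall z₀ R →
      barrier ε α R z₀ (x, y) ≤ u x / 2 + u y / 2 - u (midpoint ℝ x y))
    (hz : z ∈ Metric.ball z₀ R) : StrictMidconvexAt Ω u z := by
  obtain ⟨r, hzr, hrR⟩ := exists_between (Metric.mem_ball.1 hz)
  have hr : 0 ≤ r := dist_nonneg.trans hzr.le
  refine ⟨ε * (Real.exp (-α * r ^ 2) - Real.exp (-α * R ^ 2)),
    mul_pos hε (sub_pos.2 (Real.exp_lt_exp.2 ?_)), ?_⟩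
  · rw [neg_mul, neg_mul]
    gcongr
  filter_upwards [Metric.isOpen_ball.mem_nhds (Metric.mem_ball.2 hzr)] with m hm x hx y hy hxy
  subst hxy
  refine le_trans ?_ (hgap x hx y hy ((Metric.mem_ball.1 hm).trans hrR).le)
  rw [barrier, mul_assoc, gaussian, neg_mul, neg_mul, neg_mul, ← dist_eq_norm _ z₀]
  gcongr
  exact (Metric.mem_ball.1 hm).le

variable [ProperSpace H]

theorem LeviComparison.barrier_le_gap (hcomp : LeviComparison ι Ω u c) (hc : 0 < c)
    (hΩ : IsOpen Ω) (hbdd : Bornology.IsBounded Ω) (hconv : Convex ℝ Ω)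
    (hu : ContDiffOn ℝ 2 u Ω) (hexh : IsExhaustion Ω u)
    (hnear : ∀ x ∈ Ω, ∀ y ∈ Ω, dist (midpoint ℝ x y) z₀ < ρ →
      ε * ‖x - y‖ ^ 2 ≤ u x / 2 + u y / 2 - u (midpoint ℝ x y))
    (hupper : ∀ x ∈ Ω, ∀ y ∈ Ω, midpoint ℝ x y ∈ Metric.closedBall z₀ R →
      barrier ε α R z₀ (x, y) + u (midpoint ℝ x y) ≤ C)
    (hpinch : ∀ x ∈ Ω, ∀ y ∈ Ω, u x / 2 + u y / 2 ≤ C →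
      IsLeviPinched u μ Λ x ∧ IsLeviPinched u μ Λ y)
    (hμ : 0 < μ) (hΛ : 0 < Λ) (hε : 0 < ε) (hεμ : 32 * ε ≤ μ) (hα : 0 ≤ α) (hρ : 0 ≤ ρ)
    (hαρ : c + α * (Fintype.card ι / μ) < α ^ 2 / 2 * (μ / Λ ^ 2 * ρ ^ 2)) (hx : x ∈ Ω)
    (hy : y ∈ Ω) (hm : midpoint ℝ x y ∈ Metric.closedBall z₀ R) :
    barrier ε α R z₀ (x, y) ≤ u x / 2 + u y / 2 - u (midpoint ℝ x y) := by
  let : InnerProductSpace ℝ H := InnerProductSpace.complexToReal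
  let f : H × H → H := fun p => midpoint ℝ p.1 p.2
  have hf : Continuous f := by
    simp only [f, midpoint_eq_smul_add]
    fun_prop
  have htwo (p : H × H) : twoPoint u 1 0 (barrier ε α R z₀) p =
      barrier ε α R z₀ p + u (f p) - u p.1 / 2 - u p.2 / 2 := by
    rw [twoPoint, one_smul, add_zero]
  obtain ⟨⟨x', y'⟩, ⟨⟨hx', hy'⟩, hm'⟩, hmax⟩ := hexh.exists_isMaxOn_twoPoint (t := 1) (b := 0)
    (J := barrier ε α R z₀) (T := f ⁻¹' Metric.closedBall z₀ R) (C := C) hu.continuousOn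
    contDiff_barrier.continuous
    (fun p hp => by simpa only [one_smul, add_zero] using hconv.midpoint_mem hp.1 hp.2)
    (fun p hp => by simpa only [one_smul, add_zero] using hupper _ hp.1.1 _ hp.1.2 hp.2)
    (Metric.isClosed_closedBall.preimage hf) ⟨(x, y), ⟨hx, hy⟩, hm⟩
  have hm'Ω := hconv.midpoint_mem hx' hy'
  suffices twoPoint u 1 0 (barrier ε α R z₀) (x', y') ≤ 0 by
    have := (isMaxOn_iff.1 hmax (x, y) ⟨⟨hx, hy⟩, hm⟩).trans this
    rw [htwo] at this
    linarith
  by_contra! hpos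
  have hgap : u x' / 2 + u y' / 2 - u (midpoint ℝ x' y') < barrier ε α R z₀ (x', y') := by
    rw [htwo] at hpos
    linarith
  rcases lt_or_ge (dist (midpoint ℝ x' y') z₀) ρ with hlt | hge
  · exact hgap.not_ge ((barrier_le hε.le hα _).trans (hnear _ hx' _ hy' hlt))
  rcases (Metric.mem_closedBall.1 hm').eq_or_lt with heq | hlt
  · rw [barrier_eq_zero heq] at hgap
    linarith [hcomp.midpoint_le hc hΩ hbdd hconv hu hexh hx' hy']
  have hlocal : IsLocalMax (twoPoint u 1 0 (barrier ε α R z₀)) (x', y') :=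
    hmax.isLocalMax <| inter_mem ((hΩ.prod hΩ).mem_nhds ⟨hx', hy'⟩) <|
      hf.continuousAt.preimage_mem_nhds (Metric.closedBall_mem_nhds_of_mem hlt)
  obtain ⟨hpx, hpy⟩ := hpinch _ hx' _ hy' (by linarith [hupper _ hx' _ hy' hm'])
  exact hpos.not_ge (hcomp.twoPoint_barrier_nonpos_of_isLocalMax hc.le hΩ hu hx' hy' hm'Ω hμ hΛ
    hpx hpy hε hεμ hα hρ hαρ hge hlt.le hlocal)

theorem LeviComparison.exists_barrier_le_gap (hcomp : LeviComparison ι Ω u c) (hc : 0 < c)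
    (hΩ : IsOpen Ω) (hbdd : Bornology.IsBounded Ω) (hconv : Convex ℝ Ω)
    (hu : ContDiffOn ℝ 2 u Ω) (hexh : IsExhaustion Ω u) (hstrict : StrictMidconvexAt Ω u z₀)
    (hball : Metric.closedBall z₀ R ⊆ Ω) : ∃ ε > 0, ∃ α > 0, ∀ x ∈ Ω, ∀ y ∈ Ω,
      midpoint ℝ x y ∈ Metric.closedBall z₀ R →
        barrier ε α R z₀ (x, y) ≤ u x / 2 + u y / 2 - u (midpoint ℝ x y) := by
  obtain ⟨ε₀, hε₀, hnear⟩ := hstrict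
  obtain ⟨ρ, hρ, hnear⟩ := Metric.eventually_nhds_iff.1 hnear
  obtain ⟨C, hC⟩ := (isCompact_closedBall z₀ R).bddAbove_image (hu.continuousOn.mono hball)
  obtain ⟨B, hB⟩ := hbdd.exists_norm_le
  obtain ⟨K, hKΩ, hK, hmemK⟩ := hexh.exists_isCompact_average_le hu.continuousOn ((B + B) ^ 2 + C)
  obtain ⟨μ, hμ, Λ, hΛ, hpinch⟩ := hcomp.exists_isLeviPinched hΩ hu hK hKΩ
  obtain ⟨α, hα, hαρ⟩ := exists_pos_add_mul_lt_sq_mul c (Fintype.card ι / μ)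
    (show 0 < μ / Λ ^ 2 * ρ ^ 2 by positivity)
  obtain ⟨ε, hε, hε_le⟩ := exists_between (show 0 < min 1 (min ε₀ (μ / 32)) by positivity)
  obtain ⟨hε₁, hεε₀, hεμ⟩ : ε < 1 ∧ ε < ε₀ ∧ ε < μ / 32 := by simpa only [lt_min_iff] using hε_le
  refine ⟨ε, hε, α, hα, fun x hx y hy hm => hcomp.barrier_le_gap hc hΩ hbdd hconv hu hexh
    (C := (B + B) ^ 2 + C) (fun x hx y hy hm => ?_) (fun x hx y hy hm => ?_)
    (fun x hx y hy hxy => (hmemK x hx y hy hxy).imp (hpinch x) (hpinch y)) hμ hΛ hε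
    (by linarith) hα.le hρ.le hαρ hx hy hm⟩
  · exact (by gcongr : ε * ‖x - y‖ ^ 2 ≤ ε₀ * ‖x - y‖ ^ 2).trans (hnear hm x hx y hy rfl)
  · have hdist : ‖x - y‖ ≤ B + B := norm_sub_le_of_le (hB x hx) (hB y hy)
    have hbarrier : barrier ε α R z₀ (x, y) ≤ 1 * (B + B) ^ 2 :=
      (barrier_le hε.le hα.le _).trans (by gcongr)
    linarith [hC ⟨_, hm, rfl⟩]

theorem LeviComparison.strictMidconvexAt (hcomp : LeviComparison ι Ω u c) (hc : 0 < c)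
    (hΩ : IsOpen Ω) (hbdd : Bornology.IsBounded Ω) (hconv : Convex ℝ Ω)
    (hu : ContDiffOn ℝ 2 u Ω) (hexh : IsExhaustion Ω u) (hz : z ∈ Ω) :
    StrictMidconvexAt Ω u z := by
  let : InnerProductSpace ℝ H := InnerProductSpace.complexToReal
  obtain ⟨z₁, hz₁, hD⟩ :=
    hexh.exists_two_mul_sq_norm_le_fderiv_fderiv hΩ hbdd hu ⟨z, hz⟩
  have hz₁strict : StrictMidconvexAt Ω u z₁ :=
    strictMidconvexAt_of_fderiv_fderiv hΩ hbdd hconv hu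
      (fun x hx y hy => hcomp.midpoint_le hc hΩ hbdd hconv hu hexh hx hy) hz₁ two_pos hD
  refine hconv.isPreconnected.subset_of_closure_inter_subset isOpen_setOf_strictMidconvexAt
    ⟨z₁, hz₁, hz₁strict⟩ ?_ hz
  rintro x ⟨hx, hxΩ⟩
  obtain ⟨r, hr, hball⟩ := Metric.isOpen_iff.1 hΩ x hxΩ
  obtain ⟨z₀, hz₀, hxz₀⟩ := Metric.mem_closure_iff.1 hx (r / 2) (half_pos hr)
  have hsub : Metric.closedBall z₀ (r / 2) ⊆ Ω := fun p hp => hball <| by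
    have := dist_triangle p z₀ x
    rw [dist_comm] at hxz₀
    rw [Metric.mem_closedBall] at hp
    exact Metric.mem_ball.2 (by linarith)
  obtain ⟨ε, hε, α, hα, hgap⟩ := hcomp.exists_barrier_le_gap hc hΩ hbdd hconv hu hexh hz₀ hsub
  exact .of_barrier_le_gap hε hα hgap hxz₀

theorem LeviComparison.fderiv_fderiv_pos (hcomp : LeviComparison ι Ω u c) (hc : 0 < c)
    (hΩ : IsOpen Ω) (hbdd : Bornology.IsBounded Ω) (hconv : Convex ℝ Ω)
    (hu : ContDiffOn ℝ 2 u Ω) (hexh : IsExhaustion Ω u) (hz : z ∈ Ω) {w : H} (hw : w ≠ 0) :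
    0 < fderiv ℝ (fderiv ℝ u) z w w :=
  (hcomp.strictMidconvexAt hc hΩ hbdd hconv hu hexh hz).fderiv_fderiv_pos (hΩ.mem_nhds hz)
    (hu.contDiffAt (hΩ.mem_nhds hz)) hw

end Propagation

section Diagonalisation

theorem conjTranspose_mul_mul_mul {n R : Type*} [Fintype n] [NonUnitalSemiring R] [StarRing R]
    (a X Y : Matrix n n R) : (X * Y)ᴴ * a * (X * Y) = Yᴴ * (Xᴴ * a * X) * Y := by
  simp only [conjTranspose_mul, Matrix.mul_assoc]

variable {n 𝕜 : Type*} [Fintype n] [DecidableEq n] [RCLike 𝕜] {a b p X Y : Matrix n n 𝕜}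
  {κ l : n → ℝ} {α β γ : ℝ}

theorem conjTranspose_mul_mul_mul_diagonal (d : n → ℝ)
    (hX : Xᴴ * a * X = diagonal fun i => (l i : 𝕜)) :
    (X * diagonal fun i => (d i : 𝕜))ᴴ * a * (X * diagonal fun i => (d i : 𝕜)) =
      diagonal fun i => ((d i ^ 2 * l i : ℝ) : 𝕜) := by
  rw [conjTranspose_mul_mul_mul, hX, diagonal_conjTranspose, diagonal_mul_diagonal,
    diagonal_mul_diagonal]
  congr! with i
  simp
  ring

theorem exists_conjTranspose_mul_mul_eq_diagonal_eigenvalues (ha : a.IsHermitian) :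
    ∃ U : Matrix n n 𝕜, Uᴴ * U = 1 ∧
      Uᴴ * a * U = diagonal fun i => (ha.eigenvalues i : 𝕜) := by
  have hdiag := ha.conjStarAlgAut_star_eigenvectorUnitary
  rw [Unitary.conjStarAlgAut_star_apply] at hdiag
  exact ⟨ha.eigenvectorUnitary, Unitary.coe_star_mul_self _, hdiag⟩

theorem exists_conjTranspose_mul_mul_eq_one (ha : a.PosDef) :
    ∃ X : Matrix n n 𝕜, Xᴴ * a * X = 1 := by
  obtain ⟨U, -, hU⟩ := exists_conjTranspose_mul_mul_eq_diagonal_eigenvalues ha.isHermitian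
  refine ⟨_, (conjTranspose_mul_mul_mul_diagonal
    (fun i => (Real.sqrt (ha.isHermitian.eigenvalues i))⁻¹) hU).trans ?_⟩
  rw [← diagonal_one]
  congr! with i
  have hi := ha.eigenvalues_pos i
  rw [inv_pow, Real.sq_sqrt hi.le, inv_mul_cancel₀ hi.ne', RCLike.ofReal_one]

theorem exists_conjTranspose_mul_mul_eq_diagonal (ha : a.PosDef) (hb : b.PosDef) :
    ∃ (Y : Matrix n n 𝕜) (κ : n → ℝ), (∀ i, 0 < κ i) ∧
      Yᴴ * a * Y = diagonal (fun i => (((κ i)⁻¹ : ℝ) : 𝕜)) ∧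
        Yᴴ * b * Y = diagonal fun i => (κ i : 𝕜) := by
  obtain ⟨X, hX⟩ := exists_conjTranspose_mul_mul_eq_one ha
  have hb' : (Xᴴ * b * X).PosDef := hb.conjTranspose_mul_mul_same
    (mulVec_injective_of_isUnit (isUnit_of_mul_isUnit_right (hX ▸ isUnit_one)))
  obtain ⟨U, hUU, hU⟩ := exists_conjTranspose_mul_mul_eq_diagonal_eigenvalues hb'.isHermitian
  set l := hb'.isHermitian.eigenvalues
  have hl (i : n) : 0 < Real.sqrt (l i) := Real.sqrt_pos.2 (hb'.eigenvalues_pos i)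
  have ha₁ : (X * U)ᴴ * a * (X * U) = diagonal fun _ => ((1 : ℝ) : 𝕜) := by
    rw [conjTranspose_mul_mul_mul, hX, Matrix.mul_one, hUU, RCLike.ofReal_one, diagonal_one]
  have hb₁ : (X * U)ᴴ * b * (X * U) = diagonal fun i => (l i : 𝕜) := by
    rw [conjTranspose_mul_mul_mul, hU]
  let d (i : n) : ℝ := (Real.sqrt (Real.sqrt (l i)))⁻¹
  have hd (i : n) : d i ^ 2 = (Real.sqrt (l i))⁻¹ := by rw [inv_pow, Real.sq_sqrt (hl i).le]
  refine ⟨_, fun i => Real.sqrt (l i), hl,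
    (conjTranspose_mul_mul_mul_diagonal d ha₁).trans ?_,
    (conjTranspose_mul_mul_mul_diagonal d hb₁).trans ?_⟩
  · simp only [hd, mul_one]
  · congr! 3 with i
    rw [hd, inv_mul_eq_iff_eq_mul₀ (hl i).ne', Real.mul_self_sqrt (hb'.eigenvalues_pos i).le]

theorem re_det_le_exp_sum_re_diag_sub_one (ha : a.PosDef) :
    RCLike.re a.det ≤ Real.exp (∑ i, (RCLike.re (a i i) - 1)) := by
  set l := ha.isHermitian.eigenvalues
  have hdet : RCLike.re a.det = ∏ i, l i := by
    rw [ha.isHermitian.det_eq_prod_eigenvalues, ← RCLike.ofReal_prod, RCLike.ofReal_re]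
  have htrace : ∑ i, RCLike.re (a i i) = ∑ i, l i := by
    have h := congrArg RCLike.re ha.isHermitian.trace_eq_sum_eigenvalues
    rwa [Matrix.trace, map_sum, ← RCLike.ofReal_sum, RCLike.ofReal_re] at h
  rw [hdet, Finset.sum_sub_distrib, htrace, ← Finset.sum_sub_distrib, Real.exp_sum]
  exact Finset.prod_le_prod (fun i _ => (ha.eigenvalues_pos i).le) fun i _ => by
    linarith [Real.add_one_le_exp (l i - 1)]

theorem re_det_le_prod_re_diag (ha : a.PosDef) :
    RCLike.re a.det ≤ ∏ i, RCLike.re (a i i) := by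
  have hdiag (i : n) : 0 < RCLike.re (a i i) := (RCLike.pos_iff.1 ha.diag_pos).1
  let d (i : n) : ℝ := (Real.sqrt (RCLike.re (a i i)))⁻¹
  have hd (i : n) : d i ^ 2 = (RCLike.re (a i i))⁻¹ := by rw [inv_pow, Real.sq_sqrt (hdiag i).le]
  have hd₀ (i : n) : d i ≠ 0 := inv_ne_zero (Real.sqrt_pos.2 (hdiag i)).ne'
  let D : Matrix n n 𝕜 := diagonal fun i => (d i : 𝕜)
  have hD : IsUnit D := by simp [D, isUnit_diagonal, Pi.isUnit_iff, hd₀]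
  have hscaled := re_det_le_exp_sum_re_diag_sub_one
    (ha.conjTranspose_mul_mul_same (mulVec_injective_of_isUnit hD))
  have hdetD : (Dᴴ * a * D).det = ((∏ i, d i ^ 2 : ℝ) : 𝕜) * a.det := by
    simp only [D, diagonal_conjTranspose, det_mul, det_diagonal]
    simp [Finset.prod_pow]
    ring
  have hone (i : n) : RCLike.re ((Dᴴ * a * D) i i) = 1 := by
    have : (Dᴴ * a * D) i i = ((d i ^ 2 : ℝ) : 𝕜) * a i i := by
      simp [D, diagonal_conjTranspose]
      ring
    rw [this, RCLike.re_ofReal_mul, hd, inv_mul_cancel₀ (hdiag i).ne']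
  simp only [hone, sub_self, Finset.sum_const_zero, Real.exp_zero, hdetD, RCLike.re_ofReal_mul, hd,
    Finset.prod_inv_distrib] at hscaled
  simpa using (inv_mul_le_iff₀ (Finset.prod_pos fun i _ => hdiag i)).1 hscaled

theorem isUnit_of_conjTranspose_mul_mul_eq_diagonal (hl : ∀ i, l i ≠ 0)
    (ha : Yᴴ * a * Y = diagonal fun i => (l i : 𝕜)) : IsUnit Y :=
  isUnit_of_mul_isUnit_right (x := Yᴴ * a) <| ha ▸ isUnit_diagonal.2 <|
    Pi.isUnit_iff.2 fun i => isUnit_iff_ne_zero.2 <| RCLike.ofReal_ne_zero.2 (hl i)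

theorem det_conjTranspose_mul_mul (a Y : Matrix n n 𝕜) :
    (Yᴴ * a * Y).det = ((‖Y.det‖ ^ 2 : ℝ) : 𝕜) * a.det := by
  rw [det_mul, det_mul, det_conjTranspose, mul_right_comm, RCLike.star_def, RCLike.conj_mul,
    RCLike.ofReal_pow]

theorem norm_sq_det_mul_eq_of_conjTranspose_mul_mul_eq_diagonal
    (ha : Yᴴ * a * Y = diagonal fun i => (l i : 𝕜)) (hdet : a.det = (α : 𝕜)) :
    ‖Y.det‖ ^ 2 * α = ∏ i, l i := by
  have h := congrArg det ha
  rw [det_conjTranspose_mul_mul, det_diagonal, hdet] at h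
  exact_mod_cast h

theorem norm_sq_det_eq_exp (hκ : ∀ i, 0 < κ i)
    (ha : Yᴴ * a * Y = diagonal fun i => (((κ i)⁻¹ : ℝ) : 𝕜))
    (hb : Yᴴ * b * Y = diagonal fun i => (κ i : 𝕜))
    (hda : a.det = (Real.exp α : 𝕜)) (hdb : b.det = (Real.exp β : 𝕜)) :
    ‖Y.det‖ ^ 2 = Real.exp (-α / 2 - β / 2) := by
  have hsq : (‖Y.det‖ ^ 2) ^ 2 * (Real.exp α * Real.exp β) = 1 := by
    rw [sq, mul_mul_mul_comm, norm_sq_det_mul_eq_of_conjTranspose_mul_mul_eq_diagonal ha hda,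
      norm_sq_det_mul_eq_of_conjTranspose_mul_mul_eq_diagonal hb hdb, ← Finset.prod_mul_distrib]
    exact Finset.prod_eq_one fun i _ => inv_mul_cancel₀ (hκ i).ne'
  refine (pow_left_inj₀ (by positivity) (Real.exp_pos _).le two_ne_zero).1 ?_
  rw [eq_inv_of_mul_eq_one_left hsq, ← Real.exp_add, ← Real.exp_neg, ← Real.exp_nat_mul]
  congr 1
  push_cast
  ring

theorem exp_le_prod_re_diag (hκ : ∀ i, 0 < κ i)
    (ha : Yᴴ * a * Y = diagonal fun i => (((κ i)⁻¹ : ℝ) : 𝕜))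
    (hb : Yᴴ * b * Y = diagonal fun i => (κ i : 𝕜))
    (hda : a.det = (Real.exp α : 𝕜)) (hdb : b.det = (Real.exp β : 𝕜))
    (hp : p.PosDef) (hdp : p.det = (Real.exp γ : 𝕜)) :
    Real.exp (γ - α / 2 - β / 2) ≤ ∏ i, RCLike.re ((Yᴴ * p * Y) i i) := by
  have hY := norm_sq_det_eq_exp hκ ha hb hda hdb
  calc Real.exp (γ - α / 2 - β / 2) = ‖Y.det‖ ^ 2 * Real.exp γ := by
        rw [hY, ← Real.exp_add]
        congr 1
        ring
    _ = RCLike.re (Yᴴ * p * Y).det := by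
        rw [det_conjTranspose_mul_mul, hdp, RCLike.re_ofReal_mul, RCLike.ofReal_re]
    _ ≤ _ := re_det_le_prod_re_diag
        (hp.conjTranspose_mul_mul_same (mulVec_injective_of_isUnit
          (isUnit_of_conjTranspose_mul_mul_eq_diagonal (fun i => (hκ i).ne') hb)))

end Diagonalisation

section SchurComplement

variable {n : Type*} [Fintype n] {A B : Matrix n n ℂ}

/-- The real quadratic form `Re (∑ᵢⱼ A_{ij} wᵢ w̄ⱼ + ∑ᵢⱼ B_{ij} wᵢ wⱼ)`; for the complex Hessian `A`
and `B = (u_{ij})` it is half of the real Hessian of `u`. -/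
def hessianForm (A B : Matrix n n ℂ) (w : n → ℂ) : ℝ :=
  (star w ⬝ᵥ Aᵀ *ᵥ w + w ⬝ᵥ B *ᵥ w).re

theorem hessianForm_add_add_hessianForm_smul_sub (A B : Matrix n n ℂ) (p q : n → ℂ) :
    hessianForm A B (p + q) + hessianForm A B (Complex.I • (p - q)) =
      2 * (star p ⬝ᵥ Aᵀ *ᵥ p + p ⬝ᵥ B *ᵥ q + q ⬝ᵥ B *ᵥ p + star q ⬝ᵥ Aᵀ *ᵥ q).re := by
  have hA : star (Complex.I • (p - q)) ⬝ᵥ Aᵀ *ᵥ (Complex.I • (p - q)) =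
      star (p - q) ⬝ᵥ Aᵀ *ᵥ (p - q) := by
    rw [star_smul, mulVec_smul, smul_dotProduct, dotProduct_smul, smul_smul]
    simp
  have hB : (Complex.I • (p - q)) ⬝ᵥ B *ᵥ (Complex.I • (p - q)) = -((p - q) ⬝ᵥ B *ᵥ (p - q)) := by
    rw [mulVec_smul, smul_dotProduct, dotProduct_smul, smul_smul, Complex.I_mul_I, neg_one_smul]
  simp only [hessianForm, hA, hB, star_add, star_sub, mulVec_add, mulVec_sub, dotProduct_add,
    dotProduct_sub, add_dotProduct, sub_dotProduct, Complex.add_re, Complex.sub_re, Complex.neg_re]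
  ring

theorem hessianForm_star_add_add_hessianForm_smul_star_sub (A : Matrix n n ℂ) (hB : B.IsSymm)
    (v θ : n → ℂ) :
    hessianForm A B (star v + θ) + hessianForm A B (Complex.I • (star v - θ)) =
      2 * (star (v ⊕ᵥ θ) ᵥ* fromBlocks A B Bᴴ Aᵀ ⬝ᵥ (v ⊕ᵥ θ)).re := by
  have hA : star (star v) ⬝ᵥ Aᵀ *ᵥ star v = star v ⬝ᵥ A *ᵥ v := by
    rw [star_star, mulVec_transpose, dotProduct_comm, dotProduct_mulVec]
  have hBθ : θ ⬝ᵥ B *ᵥ star v = star v ⬝ᵥ B *ᵥ θ := by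
    rw [dotProduct_mulVec, ← mulVec_transpose, hB.eq, dotProduct_comm]
  have hBH : (star θ ⬝ᵥ Bᴴ *ᵥ v).re = (star v ⬝ᵥ B *ᵥ θ).re := by
    rw [star_dotProduct, star_mulVec, conjTranspose_conjTranspose, ← dotProduct_mulVec]
    exact Complex.conj_re _
  rw [hessianForm_add_add_hessianForm_smul_sub, hA, hBθ, Function.star_sumElim,
    vecMul_fromBlocks, sumElim_dotProduct_sumElim, add_dotProduct, add_dotProduct]
  simp only [← dotProduct_mulVec, Sum.elim_comp_inl, Sum.elim_comp_inr, Complex.add_re, hBH]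
  ring

variable [DecidableEq n]

theorem posDef_sub_mul_transpose_inv_mul (hA : A.PosDef) (hB : B.IsSymm)
    (hpos : ∀ w ≠ 0, 0 < hessianForm A B w) : (A - B * (Aᵀ)⁻¹ * Bᴴ).PosDef := by
  have hAT : Aᵀ.PosDef := hA.transpose
  let : Invertible Aᵀ := hAT.isUnit.invertible
  have hnonneg (w : n → ℂ) : 0 ≤ hessianForm A B w := by
    rcases eq_or_ne w 0 with rfl | hw
    · simp [hessianForm]
    · exact (hpos w hw).le
  have hherm : (A - B * (Aᵀ)⁻¹ * Bᴴ).IsHermitian :=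
    hA.isHermitian.sub (isHermitian_mul_mul_conjTranspose B hAT.isHermitian.inv)
  refine .of_dotProduct_mulVec_pos hherm fun v hv => Complex.pos_iff.2
    ⟨?_, (hherm.im_star_dotProduct_mulVec_self v).symm⟩
  -- The Schur complement is the value of the block form at the minimiser in the second variable.
  let θ := -(((Aᵀ)⁻¹ * Bᴴ) *ᵥ v)
  have hschur := schur_complement_eq₂₂ A B v θ hAT.isHermitian
  have hcancel : ((Aᵀ)⁻¹ * Bᴴ) *ᵥ v + θ = 0 := add_neg_cancel _
  rw [hcancel, dotProduct_zero, zero_add, ← dotProduct_mulVec (star v)] at hschur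
  have hsum := hessianForm_star_add_add_hessianForm_smul_star_sub A hB v θ
  rw [hschur] at hsum
  suffices star v + θ ≠ 0 ∨ Complex.I • (star v - θ) ≠ 0 by
    rcases this with h | h
    · linarith [hpos _ h, hnonneg (Complex.I • (star v - θ))]
    · linarith [hpos _ h, hnonneg (star v + θ)]
  by_contra! h
  have hdiff : star v = θ := sub_eq_zero.1 ((smul_eq_zero_iff_right Complex.I_ne_zero).1 h.2)
  have hsum : star v = -θ := eq_neg_of_add_eq_zero_left h.1
  exact hv (star_eq_zero.1 (self_eq_neg.1 (hsum.trans (congrArg Neg.neg hdiff.symm))))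

end SchurComplement

section EntrywiseConjugate

variable {n : ℕ} {M : Matrix (Fin n) (Fin n) ℂ}

theorem mconj_eq_transpose (hM : M.IsHermitian) : mconj M = Mᵀ := by
  conv_rhs => rw [← hM.eq]
  rfl

theorem mconj_eq_conjTranspose (hM : M.IsSymm) : mconj M = Mᴴ := by
  rw [conjTranspose, hM.eq]
  rfl

end EntrywiseConjugate

section ComplexParts

variable {E F : Type*} [AddCommGroup E] [Module ℂ E] [AddCommGroup F] [Module ℝ F]

theorem map_complex_smul (f : E →ₗ[ℝ] F) (c : ℂ) (v : E) :
    f (c • v) = c.re • f v + c.im • f (Complex.I • v) := by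
  conv_lhs => rw [← Complex.re_add_im c, add_smul, mul_smul, Complex.coe_smul, Complex.coe_smul]
  rw [map_add, map_smul, map_smul]

theorem map_I_smul_complex_smul (f : E →ₗ[ℝ] F) (c : ℂ) (v : E) :
    f (Complex.I • c • v) = c.re • f (Complex.I • v) - c.im • f v := by
  rw [smul_comm, map_complex_smul f c, smul_smul, Complex.I_mul_I, neg_one_smul, map_neg, smul_neg,
    sub_eq_add_neg]

/-- The complex-bilinear part of a real bilinear form `D`; for the second derivative of `u` it is
`(v, w) ↦ ∑ᵢⱼ u_{ij} vᵢ wⱼ`. -/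
def bilinearPart (D : E →ₗ[ℝ] E →ₗ[ℝ] ℝ) : E →ₗ[ℂ] E →ₗ[ℂ] ℂ :=
  LinearMap.mk₂ ℂ
    (fun v w => ((D v w - D (Complex.I • v) (Complex.I • w) : ℝ) -
      Complex.I * (D v (Complex.I • w) + D (Complex.I • v) w : ℝ)) / 4)
    (fun v v' w => by
      simp only [smul_add, map_add, LinearMap.add_apply]
      push_cast
      ring)
    (fun c v w => by
      simp only [map_complex_smul D c, map_I_smul_complex_smul, LinearMap.add_apply,
        LinearMap.sub_apply, LinearMap.smul_apply, smul_eq_mul]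
      apply Complex.ext <;> simp <;> ring)
    (fun v w w' => by
      simp only [smul_add, map_add]
      push_cast
      ring)
    (fun c v w => by
      simp only [map_complex_smul _ c, map_I_smul_complex_smul, smul_eq_mul]
      apply Complex.ext <;> simp <;> ring)

theorem bilinearPart_symm {D : E →ₗ[ℝ] E →ₗ[ℝ] ℝ} (hD : ∀ v w, D v w = D w v) (v w : E) :
    bilinearPart D v w = bilinearPart D w v := by
  simp only [bilinearPart, LinearMap.mk₂_apply, hD v, hD (Complex.I • v), add_comm (D w _)]

/-- The sesquilinear part of a real bilinear form `D`; for the second derivative of `u` it is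
`(v, w) ↦ ∑ᵢⱼ u_{jī} v̄ᵢ wⱼ`. -/
def sesquilinearPart (D : E →ₗ[ℝ] E →ₗ[ℝ] ℝ) : E →ₗ⋆[ℂ] E →ₗ[ℂ] ℂ :=
  LinearMap.mk₂'ₛₗ (starRingEnd ℂ) (RingHom.id ℂ)
    (fun v w => ((D w v + D (Complex.I • w) (Complex.I • v) : ℝ) +
      Complex.I * (D w (Complex.I • v) - D (Complex.I • w) v : ℝ)) / 4)
    (fun v v' w => by
      simp only [smul_add, map_add]
      push_cast
      ring)
    (fun c v w => by
      simp only [map_complex_smul _ c, map_I_smul_complex_smul, smul_eq_mul]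
      apply Complex.ext <;> simp <;> ring)
    (fun v w w' => by
      simp only [smul_add, map_add, LinearMap.add_apply]
      push_cast
      ring)
    (fun c v w => by
      simp only [map_complex_smul D c, map_I_smul_complex_smul, LinearMap.add_apply,
        LinearMap.sub_apply, LinearMap.smul_apply, smul_eq_mul]
      apply Complex.ext <;> simp <;> ring)

end ComplexParts

section WirtingerHessian

variable {n : ℕ} {u : (Fin n → ℂ) → ℝ} {z : Fin n → ℂ}

theorem fderiv_cplx_apply (hu : DifferentiableAt ℝ u z) (w : Fin n → ℂ) :
    fderiv ℝ (cplx u) z w = fderiv ℝ u z w := by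
  have h : HasFDerivAt (cplx u) (Complex.ofRealCLM ∘L fderiv ℝ u z) z :=
    Complex.ofRealCLM.hasFDerivAt.comp z hu.hasFDerivAt
  simp [h.fderiv]

theorem hasFDerivAt_fderiv_cplx_apply (hu : ContDiffAt ℝ 2 u z) (w : Fin n → ℂ) :
    HasFDerivAt (fun y => fderiv ℝ (cplx u) y w)
      (Complex.ofRealCLM ∘L (fderiv ℝ (fderiv ℝ u) z).flip w) z := by
  have hfderiv : DifferentiableAt ℝ (fderiv ℝ u) z :=
    (hu.fderiv_right (m := 1) le_rfl).differentiableAt one_ne_zero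
  have happly : HasFDerivAt (fun y => fderiv ℝ u y w) ((fderiv ℝ (fderiv ℝ u) z).flip w) z := by
    simpa using hfderiv.hasFDerivAt.clm_apply (hasFDerivAt_const w z)
  refine (Complex.ofRealCLM.hasFDerivAt.comp z happly).congr_of_eventuallyEq ?_
  filter_upwards [hu.eventually (by simp)] with y hy
    using fderiv_cplx_apply (hy.differentiableAt two_ne_zero) w

theorem single_I_eq_I_smul_single (i : Fin n) :
    (Pi.single i Complex.I : Fin n → ℂ) = Complex.I • Pi.single i 1 := by
  rw [← Pi.single_smul, smul_eq_mul, mul_one]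

theorem hessA_apply (hu : ContDiffAt ℝ 2 u z) (i j : Fin n) :
    hessA u z i j = sesquilinearPart (fderiv ℝ (fderiv ℝ u) z).toLinearMap₁₂
      (Pi.single j 1) (Pi.single i 1) := by
  have h (w : Fin n → ℂ) := hasFDerivAt_fderiv_cplx_apply hu w
  have hbar : HasFDerivAt (wdzbar (cplx u) j) _ z :=
    ((h (Pi.single j 1)).add ((h (Pi.single j Complex.I)).const_mul Complex.I)).mul_const 2⁻¹
  simp only [hessA, of_apply, wdz, hbar.fderiv, sesquilinearPart, LinearMap.mk₂'ₛₗ_apply,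
    ← single_I_eq_I_smul_single]
  apply Complex.ext <;> simp <;> ring

theorem hessB_apply (hu : ContDiffAt ℝ 2 u z) (i j : Fin n) :
    hessB u z i j = bilinearPart (fderiv ℝ (fderiv ℝ u) z).toLinearMap₁₂
      (Pi.single i 1) (Pi.single j 1) := by
  have h (w : Fin n → ℂ) := hasFDerivAt_fderiv_cplx_apply hu w
  have hz : HasFDerivAt (wdz (cplx u) j) _ z :=
    ((h (Pi.single j 1)).sub ((h (Pi.single j Complex.I)).const_mul Complex.I)).mul_const 2⁻¹
  simp only [hessB, of_apply]
  rw [wdz, hz.fderiv]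
  simp only [bilinearPart, LinearMap.mk₂_apply, ← single_I_eq_I_smul_single]
  apply Complex.ext <;> simp <;> ring

theorem star_dotProduct_transpose_hessA_mulVec (hu : ContDiffAt ℝ 2 u z) (w : Fin n → ℂ) :
    star w ⬝ᵥ (hessA u z)ᵀ *ᵥ w = levi u z w := by
  let b := Pi.basisFun ℂ (Fin n)
  have hmat : (hessA u z)ᵀ = LinearMap.toMatrix₂ b b
      (sesquilinearPart (fderiv ℝ (fderiv ℝ u) z).toLinearMap₁₂) := by
    ext i j
    rw [transpose_apply, hessA_apply hu, LinearMap.toMatrix₂_apply, Pi.basisFun_apply,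
      Pi.basisFun_apply]
  have hsymm := hu.isSymmSndFDerivAt (by simp) w (Complex.I • w)
  have happly := apply_eq_dotProduct_toMatrix₂_mulVec b b
    (sesquilinearPart (fderiv ℝ (fderiv ℝ u) z).toLinearMap₁₂) w w
  rw [hmat]
  refine happly.symm.trans ?_
  simp [sesquilinearPart, levi, hsymm]

theorem re_dotProduct_hessB_mulVec (hu : ContDiffAt ℝ 2 u z) (w : Fin n → ℂ) :
    (w ⬝ᵥ hessB u z *ᵥ w).re = (fderiv ℝ (fderiv ℝ u) z w w -
      fderiv ℝ (fderiv ℝ u) z (Complex.I • w) (Complex.I • w)) / 4 := by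
  have hmat : hessB u z = LinearMap.toMatrix₂' ℂ
      (bilinearPart (fderiv ℝ (fderiv ℝ u) z).toLinearMap₁₂) := by
    ext i j
    rw [hessB_apply hu, LinearMap.toMatrix₂'_apply]
  rw [hmat, ← Matrix.toLinearMap₂'_apply', Matrix.toLinearMap₂'_toMatrix']
  simp [bilinearPart]

theorem hessianForm_hessA_hessB (hu : ContDiffAt ℝ 2 u z) (w : Fin n → ℂ) :
    hessianForm (hessA u z) (hessB u z) w = fderiv ℝ (fderiv ℝ u) z w w / 2 := by
  rw [hessianForm, Complex.add_re, star_dotProduct_transpose_hessA_mulVec hu,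
    re_dotProduct_hessB_mulVec hu, Complex.ofReal_re, levi]
  ring

theorem isSymm_hessB (hu : ContDiffAt ℝ 2 u z) : (hessB u z).IsSymm := by
  ext i j
  rw [transpose_apply, hessB_apply hu, hessB_apply hu]
  exact bilinearPart_symm (D := (fderiv ℝ (fderiv ℝ u) z).toLinearMap₁₂)
    (hu.isSymmSndFDerivAt (by simp)) _ _

end WirtingerHessian

section LeviFrameOfMatrix

theorem star_mulVec_dotProduct_mulVec_mulVec {m n R : Type*} [Fintype m] [Fintype n]
    [NonUnitalSemiring R] [StarRing R] (a : Matrix m m R) (Y : Matrix m n R) (θ : n → R) :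
    star (Y *ᵥ θ) ⬝ᵥ a *ᵥ (Y *ᵥ θ) = star θ ⬝ᵥ (Yᴴ * a * Y) *ᵥ θ := by
  simp only [star_mulVec, dotProduct_mulVec, vecMul_vecMul]

theorem star_dotProduct_diagonal_mulVec {n : Type*} [Fintype n] [DecidableEq n] (l : n → ℝ)
    (θ : n → ℂ) :
    star θ ⬝ᵥ diagonal (fun i => (l i : ℂ)) *ᵥ θ = ((∑ i, l i * ‖θ i‖ ^ 2 : ℝ) : ℂ) := by
  simp only [dotProduct, mulVec_diagonal, Pi.star_apply, Complex.star_def, Complex.ofReal_sum,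
    Complex.ofReal_mul, Complex.ofReal_pow, ← Complex.conj_mul']
  exact Finset.sum_congr rfl fun i _ => by ring

variable {n : ℕ} {Ω : Set (Fin n → ℂ)} {u : (Fin n → ℂ) → ℝ} {x y z : Fin n → ℂ}
  {Y : Matrix (Fin n) (Fin n) ℂ} {κ l : Fin n → ℝ} {c : ℝ}

theorem levi_mulVec (hu : ContDiffAt ℝ 2 u z) (Y : Matrix (Fin n) (Fin n) ℂ) (θ : Fin n → ℂ) :
    (levi u z (Y *ᵥ θ) : ℂ) = star θ ⬝ᵥ (Yᴴ * (hessA u z)ᵀ * Y) *ᵥ θ := by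
  rw [← star_dotProduct_transpose_hessA_mulVec hu, star_mulVec_dotProduct_mulVec_mulVec]

theorem levi_col (hu : ContDiffAt ℝ 2 u z) (Y : Matrix (Fin n) (Fin n) ℂ) (i : Fin n) :
    (levi u z (Y.col i) : ℂ) = (Yᴴ * (hessA u z)ᵀ * Y) i i := by
  rw [← mulVec_single_one, levi_mulVec hu]
  simp

theorem sum_smul_col {R m n : Type*} [Fintype n] [CommSemiring R] (Y : Matrix m n R) (θ : n → R) :
    ∑ i, θ i • Y.col i = Y *ᵥ θ := by
  simp only [mulVec_eq_sum, op_smul_eq_smul]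
  rfl

theorem levi_sum_smul_col_of_eq_diagonal (hu : ContDiffAt ℝ 2 u z)
    (hY : Yᴴ * (hessA u z)ᵀ * Y = diagonal fun i => (l i : ℂ)) (θ : Fin n → ℂ) :
    levi u z (∑ i, θ i • Y.col i) = ∑ i, l i * ‖θ i‖ ^ 2 := by
  rw [sum_smul_col, ← Complex.ofReal_inj, levi_mulVec hu, hY, star_dotProduct_diagonal_mulVec]

theorem isLeviFrame_col (hux : ContDiffAt ℝ 2 u x) (huy : ContDiffAt ℝ 2 u y) (hκ : ∀ i, 0 < κ i)
    (hx : Yᴴ * (hessA u x)ᵀ * Y = diagonal fun i => (((κ i)⁻¹ : ℝ) : ℂ))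
    (hy : Yᴴ * (hessA u y)ᵀ * Y = diagonal fun i => (κ i : ℂ)) :
    IsLeviFrame u x y κ Y.col where
  pos := hκ
  span v := by
    obtain ⟨θ, hθ⟩ := mulVec_surjective_iff_isUnit.2
      (isUnit_of_conjTranspose_mul_mul_eq_diagonal (fun i => (hκ i).ne') hy) v
    exact ⟨θ, (sum_smul_col Y θ).trans hθ⟩
  levi_left := levi_sum_smul_col_of_eq_diagonal hux hx
  levi_right := levi_sum_smul_col_of_eq_diagonal huy hy

theorem leviComparison_of_det_hessA_eq_exp (hu : ∀ z ∈ Ω, ContDiffAt ℝ 2 u z)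
    (hpsh : ∀ z ∈ Ω, (hessA u z).PosDef)
    (hdet : ∀ z ∈ Ω, (hessA u z).det = (Real.exp (c * u z) : ℂ)) :
    LeviComparison (Fin n) Ω u c := by
  intro x hx y hy
  have hdetT (z) (hz : z ∈ Ω) : (hessA u z)ᵀ.det = (Real.exp (c * u z) : ℂ) := by
    rw [det_transpose, hdet z hz]
  obtain ⟨Y, κ, hκ, hYx, hYy⟩ :=
    exists_conjTranspose_mul_mul_eq_diagonal (hpsh x hx).transpose (hpsh y hy).transpose
  refine ⟨κ, Y.col, isLeviFrame_col (hu x hx) (hu y hy) hκ hYx hYy, fun z hz => ?_⟩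
  have hHadamard := exp_le_prod_re_diag hκ hYx hYy (hdetT x hx) (hdetT y hy)
    (hpsh z hz).transpose (hdetT z hz)
  simp only [← levi_col (hu z hz), RCLike.re_to_complex, Complex.ofReal_re] at hHadamard
  convert hHadamard using 2
  ring

end LeviFrameOfMatrix

section BlowUp

theorem isExhaustion_of_tendsto_frontier {X : Type*} [PseudoMetricSpace X] [ProperSpace X]
    {Ω : Set X} {u : X → ℝ} (hΩ : IsOpen Ω) (hbdd : Bornology.IsBounded Ω)
    (hu : ContinuousOn u Ω) (hblow : ∀ p ∈ frontier Ω, Tendsto u (𝓝[Ω] p) atTop) :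
    IsExhaustion Ω u := fun C => by
  refine Metric.isCompact_of_isClosed_isBounded ?_ (hbdd.subset (Set.sep_subset _ _))
  refine isClosed_of_closure_subset fun p hp => ?_
  have hfreq : ∃ᶠ z in 𝓝[Ω] p, u z ≤ C := by
    rw [frequently_nhdsWithin_iff]
    exact (mem_closure_iff_frequently.1 hp).mono fun _ hz => hz.symm
  have hpΩ : p ∈ Ω := by
    by_contra hpΩ
    have hfr : p ∈ frontier Ω :=
      hΩ.frontier_eq ▸ ⟨closure_mono (Set.sep_subset _ _) hp, hpΩ⟩
    exact hfreq ((hblow p hfr).eventually_gt_atTop C |>.mono fun _ => not_le.2)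
  exact ⟨hpΩ, isClosed_Iic.mem_of_frequently_of_tendsto hfreq (hu p hpΩ)⟩

end BlowUp

section LinearChange

variable {E F ι : Type*} [NormedAddCommGroup E] [NormedSpace ℂ E] [NormedAddCommGroup F]
  [NormedSpace ℂ F] [Fintype ι] {Ω : Set E} {u : E → ℝ} {c : ℝ}

theorem levi_comp_linear (L : F →L[ℂ] E) {p : F} (hu : ContDiffAt ℝ 2 u (L p)) (q : F) :
    levi (u ∘ L) p q = levi u (L p) (L q) := by
  simpa only [add_zero, Function.comp_def] using levi_comp_affine L 0 (by rwa [add_zero]) q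

theorem IsLeviFrame.comp_equiv {x y : E} {κ : ι → ℝ} {w : ι → E} (h : IsLeviFrame u x y κ w)
    (L : F ≃L[ℂ] E) (hx : ContDiffAt ℝ 2 u x) (hy : ContDiffAt ℝ 2 u y) :
    IsLeviFrame (u ∘ L) (L.symm x) (L.symm y) κ (L.symm ∘ w) where
  pos := h.pos
  span v := by
    obtain ⟨θ, hθ⟩ := h.span (L v)
    refine ⟨θ, ?_⟩
    rw [← L.symm_apply_apply v, ← hθ]
    simp only [map_sum, map_smul, Function.comp_apply]
  levi_left θ := by
    have hlevi := levi_comp_linear (L : F →L[ℂ] E) (p := L.symm x) (by simpa using hx)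
      (∑ i, θ i • L.symm (w i))
    simpa [h.levi_left] using hlevi
  levi_right θ := by
    have hlevi := levi_comp_linear (L : F →L[ℂ] E) (p := L.symm y) (by simpa using hy)
      (∑ i, θ i • L.symm (w i))
    simpa [h.levi_right] using hlevi

theorem LeviComparison.comp_equiv (h : LeviComparison ι Ω u c) (L : F ≃L[ℂ] E)
    (hu : ∀ z ∈ Ω, ContDiffAt ℝ 2 u z) : LeviComparison ι (L ⁻¹' Ω) (u ∘ L) c := by
  intro x hx y hy
  obtain ⟨κ, w, hframe, hle⟩ := h (L x) hx (L y) hy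
  refine ⟨κ, L.symm ∘ w, ?_, fun z hz => ?_⟩
  · simpa using hframe.comp_equiv L (hu _ hx) (hu _ hy)
  · have hlevi (i : ι) : levi (u ∘ L) z (L.symm (w i)) = levi u (L z) (w i) := by
      simpa using levi_comp_linear (L : F →L[ℂ] E) (hu _ hz) (L.symm (w i))
    simpa [hlevi] using hle (L z) hz

theorem LeviComparison.fderiv_fderiv_pos_of_finiteDimensional [FiniteDimensional ℂ E]
    (hcomp : LeviComparison ι Ω u c) (hc : 0 < c) (hΩ : IsOpen Ω) (hbdd : Bornology.IsBounded Ω)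
    (hconv : Convex ℝ Ω) (hu : ContDiffOn ℝ 2 u Ω) (hexh : IsExhaustion Ω u) {z w : E}
    (hz : z ∈ Ω) (hw : w ≠ 0) : 0 < fderiv ℝ (fderiv ℝ u) z w w := by
  have hud (z) (hz : z ∈ Ω) : ContDiffAt ℝ 2 u z := hu.contDiffAt (hΩ.mem_nhds hz)
  let L : EuclideanSpace ℂ (Fin (Module.finrank ℂ E)) ≃L[ℂ] E :=
    ContinuousLinearEquiv.ofFinrankEq finrank_euclideanSpace_fin
  let Lr : EuclideanSpace ℂ (Fin (Module.finrank ℂ E)) →L[ℝ] E :=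
    (L : _ →L[ℂ] E).restrictScalars ℝ
  have hexhL : IsExhaustion (L ⁻¹' Ω) (u ∘ L) := fun C =>
    L.toHomeomorph.isCompact_preimage.2 (hexh C)
  have hconvL : Convex ℝ (L ⁻¹' Ω) := hconv.linear_preimage Lr.toLinearMap
  have huL : ContDiffOn ℝ 2 (u ∘ L) (L ⁻¹' Ω) := hu.comp Lr.contDiff.contDiffOn fun _ h => h
  have hpos := (hcomp.comp_equiv L hud).fderiv_fderiv_pos hc (hΩ.preimage L.continuous)
    (L.antilipschitz.isBounded_preimage hbdd) hconvL huL hexhL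
    (z := L.symm z) (w := L.symm w) (by simpa using hz) (by simpa using hw)
  have hchange := fderiv_fderiv_comp_affine Lr 0 (p := L.symm z) (u := u)
    (by simpa [Lr] using hud z hz) (L.symm w)
  simp only [Lr, ContinuousLinearMap.coe_restrictScalars', ContinuousLinearEquiv.coe_coe,
    ContinuousLinearEquiv.apply_symm_apply, add_zero] at hchange
  exact hchange ▸ hpos

end LinearChange

theorem M_posdef_of_KE_general {n : ℕ} {Ω : Set (Fin n → ℂ)} (hΩ : IsOpen Ω)
    (hbdd : Bornology.IsBounded Ω) (hconv : Convex ℝ Ω) {u : (Fin n → ℂ) → ℝ}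
    (hu : ContDiffOn ℝ 2 u Ω) (hpsh : ∀ z ∈ Ω, (hessA u z).PosDef) {c : ℝ} (hc : 0 < c)
    (hdet : ∀ z ∈ Ω, (hessA u z).det = (Real.exp (c * u z) : ℂ))
    (hblow : ∀ p ∈ frontier Ω, Tendsto u (𝓝[Ω] p) atTop) :
    ∀ z ∈ Ω, (hessA u z - hessB u z * (mconj (hessA u z))⁻¹ * mconj (hessB u z)).PosDef := by
  intro z hz
  have hud (z) (hz : z ∈ Ω) : ContDiffAt ℝ 2 u z := hu.contDiffAt (hΩ.mem_nhds hz)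
  have hsymm : (hessB u z).IsSymm := isSymm_hessB (hud z hz)
  rw [mconj_eq_transpose (hpsh z hz).isHermitian, mconj_eq_conjTranspose hsymm]
  refine posDef_sub_mul_transpose_inv_mul (hpsh z hz) hsymm fun w hw => ?_
  rw [hessianForm_hessA_hessB (hud z hz)]
  have hexh := isExhaustion_of_tendsto_frontier hΩ hbdd hu.continuousOn hblow
  have hcomp := leviComparison_of_det_hessA_eq_exp hud hpsh hdet
  exact half_pos <|
    hcomp.fderiv_fderiv_pos_of_finiteDimensional hc hΩ hbdd hconv hu hexh hz hw

theorem M_posdef_of_KE (n : ℕ) (hn : 1 ≤ n)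
    (Ω : Set (Fin n → ℂ)) (hΩo : IsOpen Ω) (hΩb : Bornology.IsBounded Ω)
    (hΩsc : StrictConvex ℝ Ω)
    (hΩsmooth : ∃ ρ : (Fin n → ℂ) → ℝ, ContDiff ℝ (⊤ : ℕ∞) ρ ∧
      Ω = {z | ρ z < 0} ∧ frontier Ω = {z | ρ z = 0} ∧
      ∀ z ∈ frontier Ω, fderiv ℝ ρ z ≠ 0)
    (u : (Fin n → ℂ) → ℝ) (hu : ContDiffOn ℝ (⊤ : ℕ∞) u Ω)
    (hpsh : ∀ z ∈ Ω, (hessA u z).PosDef)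
    (hKE : ∀ z ∈ Ω, (hessA u z).det = (Real.exp ((n + 1) * u z) : ℂ))
    (hblow : ∀ p ∈ frontier Ω, Filter.Tendsto u (nhdsWithin p Ω) Filter.atTop)
    (v : (Fin n → ℂ) → ℝ) (hv2 : ContDiffOn ℝ 2 v (closure Ω))
    (hvu : ∀ z ∈ Ω, v z = Real.exp (-u z))
    (hv0 : ∀ z ∈ frontier Ω, v z = 0) :
    ∀ z ∈ Ω,
      (hessA u z - hessB u z * (mconj (hessA u z))⁻¹ * mconj (hessB u z)).PosDef := by
  exact M_posdef_of_KE_general hΩo hΩb hΩsc.convex (contDiffOn_infty.1 hu 2) hpsh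
    (by positivity) hKE hblow

end
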